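/- Network coding solvability is undecidable: there is no algorithm that, given a network, decides whether it is solvable. -/

import Mathlib

open scoped Classical

noncomputable section

/-- The probability of the event `S` under the probability mass function `p`. -/
def Pr {Ω : Type} (p : Ω → ℝ) (S : Set Ω) : ℝ := ∑' ω : S, p ω

/-- `p` is a probability mass function on the sample space `Ω`. -/
def IsProb {Ω : Type} (p : Ω → ℝ) : Prop := (∀ ω, 0 ≤ p ω) ∧ Pr p Set.univ = 1

/-- The support of a random variable `X`: the set of values attained with positive
probability. -/
def supp {Ω α : Type} (p : Ω → ℝ) (X : Ω → α) : Set α := {a | 0 < Pr p {ω | X ω = a}}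

/-- `X` is almost surely a function of `Y` (written `X ≤ι Y` in the paper). -/
def FuncOf {Ω α β : Type} (p : Ω → ℝ) (X : Ω → α) (Y : Ω → β) : Prop :=
  ∃ f : β → α, Pr p {ω | X ω = f (Y ω)} = 1

/-- The random variables `X` and `Y` are independent. -/
def IndepRV {Ω α β : Type} (p : Ω → ℝ) (X : Ω → α) (Y : Ω → β) : Prop :=
  ∀ (a : α) (b : β), Pr p {ω | X ω = a ∧ Y ω = b} = Pr p {ω | X ω = a} * Pr p {ω | Y ω = b}

/-- The random variables `X`, `Y`, `Z` are mutually independent: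
`X ⟂ Y` and `(X, Y) ⟂ Z`. -/
def Indep3 {Ω α β γ : Type} (p : Ω → ℝ) (X : Ω → α) (Y : Ω → β) (Z : Ω → γ) : Prop :=
  IndepRV p X Y ∧ IndepRV p (fun ω => (X ω, Y ω)) Z

/-- The predicate `tri(X, Y, Z)`: each variable is a.s. a function of the other two, and the
three variables are pairwise independent. -/
def tri {Ω α β γ : Type} (p : Ω → ℝ) (X : Ω → α) (Y : Ω → β) (Z : Ω → γ) : Prop :=
  FuncOf p X (fun ω => (Y ω, Z ω)) ∧ FuncOf p Y (fun ω => (X ω, Z ω)) ∧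
    FuncOf p Z (fun ω => (X ω, Y ω)) ∧
    IndepRV p X Y ∧ IndepRV p X Z ∧ IndepRV p Y Z

/-- A network coding instance: `(n, s, edges, acc, dem)` where `n` is the number of nodes
(nodes are `0, …, n−1`), `s` is the number of source messages (messages are `0, …, s−1`),
`edges` is the list of directed edges of the multigraph (edges are indexed by their
position in the list), `acc` lists, for each node `v`, the set `C_v` of message indices
the node has access to, and `dem` lists, for each node `v`, the set `D_v` of message
indices the node demands. -/
abbrev Network : Type := ℕ × ℕ × List (ℕ × ℕ) × List (List ℕ) × List (List ℕ)

/-- The indices of the edges coming into node `v`. -/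
def inEdges (edges : List (ℕ × ℕ)) (v : ℕ) : List ℕ :=
  (List.range edges.length).filter fun e => (edges.getD e (0, 0)).2 = v

/-- The indices of the edges going out of node `v`. -/
def outEdges (edges : List (ℕ × ℕ)) (v : ℕ) : List ℕ :=
  (List.range edges.length).filter fun e => (edges.getD e (0, 0)).1 = v

/-- The network is valid: the edges join existing nodes, the directed multigraph is
acyclic (it admits a topological ranking), and the access/demand lists assign a set of
existing message indices to each node. -/
def NetworkValid : Network → Prop := fun net =>
  match net with
  | (n, s, edges, acc, dem) =>
    (∀ e ∈ edges, e.1 < n ∧ e.2 < n) ∧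
    (∃ rank : ℕ → ℕ, ∀ e ∈ edges, rank e.1 < rank e.2) ∧
    acc.length = n ∧ dem.length = n ∧
    (∀ l ∈ acc, ∀ i ∈ l, i < s) ∧ (∀ l ∈ dem, ∀ i ∈ l, i < s)

/-- The network is solvable with alphabet size `q`: there are a probability space, source
messages `M_0, …, M_{s−1}` that are i.i.d. uniform with cardinality `q`, and signals
`X_e` of cardinality at most `q` along the edges, such that at every node `v` the pair
`(M_{D_v}, X_{out(v)})` is almost surely a function of `(M_{C_v}, X_{in(v)})`. -/
def SolvableWith : Network → ℕ → Prop := fun net q =>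
  match net with
  | (n, s, edges, acc, dem) =>
    ∃ (Ω : Type) (p : Ω → ℝ), IsProb p ∧
      ∃ (M : ℕ → Ω → Fin q) (X : ℕ → Ω → Fin q),
        (∀ m : ℕ → Fin q,
          Pr p {ω | ∀ i < s, M i ω = m i} = ((q : ℝ))⁻¹ ^ s) ∧
        ∀ v < n, FuncOf p
          (fun ω => (((dem.getD v []).map fun i => M i ω),
                     (outEdges edges v).map fun e => X e ω))
          (fun ω => (((acc.getD v []).map fun i => M i ω),
                     (inEdges edges v).map fun e => X e ω))

/-- The network is solvable: it is solvable with some alphabet size `q ≥ 2`. -/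
def Solvable (net : Network) : Prop := ∃ q, 2 ≤ q ∧ SolvableWith net q

/-!
Signals that behave like `a - f b`, `b - f c`, `a - f c` in messages `a`, `b`, `c` encode an
operator `f` on the alphabet, and a fourth message that masks a signal lets a network require this
signal to be a function of given data. In this way a network expresses composition laws between
operators, the vanishing of operators, and the joint injectivity of families of operators. Every
solution yields operators on a finite set that satisfy these conditions; conversely additive
operators on a nontrivial finite group that satisfy them yield a solution.

A register program on a given input is turned into such conditions, where a word
`start * tick ^ k * ∏ i, inc i ^ σ i` records the clock and the registers. If the program halts with
a nonzero output, the operator of its computation is null. Then the conditions contain bijections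
with `halve * shift = shift ^ 2 * halve`, so that on a finite set `shift` has odd order, although it
interchanges two complementary operators; hence there is no solution. If the program halts with
output zero, the finitely many configurations whose clock and registers are bounded by the final
ones can be arranged on a cycle of even length, where `halve` need not respect the relation at the
last two positions because these are recovered from the computation. The functions on that cycle
with values in `ZMod 2` then carry additive operators satisfying the conditions.

A decision procedure would therefore compute a function that differs from every computable function
at one of its codes, itself included.
-/

namespace NetworkCoding

open Function hiding const

/-! ### Register programs -/

/-- Programs over registers indexed by `ℕ`. As long as register `i` is not zero, the command
`loop i p` decrements it and runs `p`. -/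
inductive Program : Type
  | skip : Program
  | inc : ℕ → Program
  | seq : Program → Program → Program
  | loop : ℕ → Program → Program

namespace Program

/-- Timed big-step semantics: `Run p σ t τ` says that `p`, started in the register contents `σ`,
halts after `t` steps with the contents `τ`. -/
inductive Run : Program → (ℕ → ℕ) → ℕ → (ℕ → ℕ) → Prop
  | skip (σ) : Run skip σ 1 σ
  | inc (i σ) : Run (inc i) σ 1 (update σ i (σ i + 1))
  | seq {p q σ t τ t' υ} : Run p σ t τ → Run q τ t' υ → Run (seq p q) σ (1 + t + t') υ
  | loop_zero {i p σ} : σ i = 0 → Run (loop i p) σ 1 σ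
  | loop_succ {i p σ n t τ t' υ} : σ i = n + 1 → Run p (update σ i n) t τ →
      Run (loop i p) τ t' υ → Run (loop i p) σ (1 + t + t') υ

theorem Run.unique {p σ t τ} (h : Run p σ t τ) : ∀ {t' τ'}, Run p σ t' τ' → t = t' ∧ τ = τ' := by
  induction h with
  | skip σ => rintro t' τ' ⟨⟩; exact ⟨rfl, rfl⟩
  | inc i σ => rintro t' τ' ⟨⟩; exact ⟨rfl, rfl⟩
  | seq _ _ ihp ihq =>
    rintro t' τ' (_ | _ | ⟨hp, hq⟩)
    obtain ⟨rfl, rfl⟩ := ihp hp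
    obtain ⟨rfl, rfl⟩ := ihq hq
    exact ⟨rfl, rfl⟩
  | loop_zero hzero =>
    rintro t' τ' (_ | _ | _ | _ | ⟨hsucc, _, _⟩)
    · exact ⟨rfl, rfl⟩
    · omega
  | loop_succ hsucc _ _ ihbody ihloop =>
    rintro t' τ' (_ | _ | _ | hzero | ⟨hsucc', hbody, hloop⟩)
    · omega
    · obtain rfl := Nat.succ.inj (hsucc.symm.trans hsucc')
      obtain ⟨rfl, rfl⟩ := ihbody hbody
      obtain ⟨rfl, rfl⟩ := ihloop hloop
      exact ⟨rfl, rfl⟩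

/-- Every register mentioned in the program is below `m`. -/
def RegistersBelow (m : ℕ) : Program → Prop
  | skip => True
  | inc i => i < m
  | seq p q => p.RegistersBelow m ∧ q.RegistersBelow m
  | loop i p => i < m ∧ p.RegistersBelow m

theorem RegistersBelow.mono {m m' : ℕ} (h : m ≤ m') :
    ∀ {p : Program}, p.RegistersBelow m → p.RegistersBelow m'
  | skip, _ => trivial
  | inc _, hp => lt_of_lt_of_le hp h
  | seq _ _, hp => ⟨hp.1.mono h, hp.2.mono h⟩
  | loop _ _, hp => ⟨hp.1.trans_le h, hp.2.mono h⟩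

theorem exists_registersBelow : ∀ p : Program, ∃ m, p.RegistersBelow m
  | skip => ⟨0, trivial⟩
  | inc i => ⟨i + 1, Nat.lt_succ_self i⟩
  | seq p q =>
    let ⟨a, ha⟩ := p.exists_registersBelow
    let ⟨b, hb⟩ := q.exists_registersBelow
    ⟨max a b, ha.mono (le_max_left _ _), hb.mono (le_max_right _ _)⟩
  | loop i p =>
    let ⟨a, ha⟩ := p.exists_registersBelow
    ⟨max a (i + 1), (Nat.lt_succ_self i).trans_le (le_max_right _ _), ha.mono (le_max_left _ _)⟩

/-- The program `p` halts from `σ` with the register contents `τ`. -/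
def HaltsWith (p : Program) (σ τ : ℕ → ℕ) : Prop := ∃ t, Run p σ t τ

theorem HaltsWith.skip {σ} : HaltsWith .skip σ σ := ⟨_, .skip σ⟩

theorem HaltsWith.inc {i σ τ} (h : τ = update σ i (σ i + 1)) : HaltsWith (.inc i) σ τ :=
  h ▸ ⟨_, .inc i σ⟩

theorem HaltsWith.seq {p q σ υ} (τ) (hp : HaltsWith p σ τ) (hq : HaltsWith q τ υ) :
    HaltsWith (.seq p q) σ υ :=
  let ⟨_, hp⟩ := hp
  let ⟨_, hq⟩ := hq
  ⟨_, .seq hp hq⟩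

theorem HaltsWith.loop {i p σ τ} (n : ℕ) (S : ℕ → ℕ → ℕ) (hfirst : σ = S 0) (hlast : τ = S n)
    (hstep : ∀ k < n, S k i ≠ 0 ∧ HaltsWith p (update (S k) i (S k i - 1)) (S (k + 1)))
    (hzero : S n i = 0) : HaltsWith (.loop i p) σ τ := by
  subst hfirst hlast
  induction n generalizing S with
  | zero => exact ⟨_, .loop_zero hzero⟩
  | succ n ih =>
    obtain ⟨t', hrest⟩ :=
      ih (fun k => S (k + 1)) (fun k hk => hstep (k + 1) (by omega)) hzero
    obtain ⟨hne, t, hbody⟩ := hstep 0 (by omega)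
    exact ⟨_, .loop_succ (n := S 0 i - 1) (by omega) hbody hrest⟩

/-- Sets register `i` to zero. -/
def clear (i : ℕ) : Program := .loop i .skip

theorem HaltsWith.clear {i σ τ} (h : τ = update σ i 0) : HaltsWith (clear i) σ τ := by
  refine .loop (σ i) (fun k => update σ i (σ i - k)) (by simp) (by simpa using h) ?_ (by simp)
  intro k hk
  refine ⟨by simp; omega, ?_⟩
  convert HaltsWith.skip using 1
  funext j
  simp only [update_apply]
  split_ifs <;> omega

/-- Adds register `i` to register `o` and clears register `i`. -/
def move (i o : ℕ) : Program := .loop i (.inc o)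

theorem HaltsWith.move {i o σ τ} (hio : i ≠ o) (h : τ = update (update σ i 0) o (σ o + σ i)) :
    HaltsWith (move i o) σ τ := by
  refine .loop (σ i) (fun k => update (update σ i (σ i - k)) o (σ o + k)) (by simp)
    (by simpa using h) ?_ (by simp [hio])
  intro k hk
  refine ⟨by simp [hio]; omega, .inc ?_⟩
  funext j
  simp only [update_apply]
  split_ifs <;> omega

/-- Adds register `i` to register `o`, using the zero register `t` as scratch space. -/
def copy (i o t : ℕ) : Program := .seq (.loop i (.seq (.inc o) (.inc t))) (move t i)

theorem HaltsWith.copy {i o t σ τ} (hio : i ≠ o) (hit : i ≠ t) (hot : o ≠ t) (ht : σ t = 0)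
    (h : τ = update σ o (σ o + σ i)) : HaltsWith (copy i o t) σ τ := by
  refine .seq (update (update (update σ i 0) o (σ o + σ i)) t (σ i)) ?_ (.move hit.symm ?_)
  · refine .loop (σ i) (fun k => update (update (update σ i (σ i - k)) o (σ o + k)) t k)
      (by funext j; simp only [update_apply]; split_ifs <;> subst_vars <;> omega) (by simp) ?_
      (by simp [hio, hit])
    intro k hk
    refine ⟨by simp [hio, hit]; omega, .seq _ (.inc rfl) (.inc ?_)⟩
    funext j
    simp only [update_apply]
    split_ifs <;> subst_vars <;> omega
  · subst h
    funext j
    simp only [update_apply]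
    split_ifs <;> subst_vars <;> omega

theorem exists_clear_block (N k : ℕ) :
    ∃ p, ∀ σ, HaltsWith p σ (fun j => if N ≤ j ∧ j < N + k then 0 else σ j) := by
  induction k with
  | zero =>
    refine ⟨.skip, fun σ => ?_⟩
    convert HaltsWith.skip using 1
    funext j
    rw [if_neg (by omega)]
  | succ k ih =>
    obtain ⟨p, hp⟩ := ih
    refine ⟨.seq p (clear (N + k)), fun σ => .seq _ (hp σ) (.clear ?_)⟩
    funext j
    simp only [update_apply]
    split_ifs <;> first | rfl | omega

end Program

open Program

/-! ### Partial recursive functions are computed by register programs -/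

/-- The relation `R` between `n` arguments and a result is computed by register programs: for any
choice `args` of argument registers and `out` of a result register below `N`, some program turns
`σ` into `update σ out z` whenever `R` relates the arguments to `z`. The registers from `N` on
start and end at zero and serve as scratch space. -/
def RegisterComputable (n : ℕ) (R : (Fin n → ℕ) → ℕ → Prop) : Prop :=
  ∀ (args : Fin n → ℕ) (out N : ℕ), (∀ i, args i < N) → out < N → (∀ i, args i ≠ out) →
    ∃ p : Program, ∀ σ z, R (fun i => σ (args i)) z → σ out = 0 → (∀ j, N ≤ j → σ j = 0) →
      HaltsWith p σ (update σ out z)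

namespace RegisterComputable

theorem mono {n R R'} (h : RegisterComputable n R) (hR : ∀ v z, R' v z → R v z) :
    RegisterComputable n R' := by
  intro args out N hargs hout hne
  obtain ⟨p, hp⟩ := h args out N hargs hout hne
  exact ⟨p, fun σ z hz => hp σ z (hR _ _ hz)⟩

theorem proj {n} (i : Fin n) : RegisterComputable n (fun v z => z = v i) := by
  intro args out N hargs hout hne
  refine ⟨copy (args i) out N, fun σ z hz hσout hfresh => ?_⟩
  refine .copy (hne i) (hargs i).ne hout.ne (hfresh N le_rfl) ?_
  rw [hz, hσout, zero_add]

theorem succ : RegisterComputable 1 (fun v z => z = v 0 + 1) := by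
  intro args out N hargs hout hne
  refine ⟨.seq (copy (args 0) out N) (.inc out), fun σ z hz hσout hfresh => ?_⟩
  refine .seq _ (.copy (hne 0) (hargs 0).ne hout.ne (hfresh N le_rfl) rfl) (.inc ?_)
  simp [hz, hσout]

theorem zero : RegisterComputable 0 (fun _ z => z = 0) := by
  refine fun args out N _ _ _ => ⟨.skip, fun σ z hz hσout _ => ?_⟩
  convert HaltsWith.skip using 1
  rw [hz, ← hσout, update_eq_self]

theorem exists_eval_block {m n : ℕ} {G : Fin n → (Fin m → ℕ) → ℕ → Prop}
    (hG : ∀ i, RegisterComputable m (G i)) {args : Fin m → ℕ} {N : ℕ} (hargs : ∀ i, args i < N) :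
    ∀ k ≤ n, ∃ p, ∀ σ (w : ℕ → ℕ), (∀ i : Fin n, G i (fun i => σ (args i)) (w i)) →
      (∀ j, N ≤ j → σ j = 0) →
      HaltsWith p σ (fun j => if N ≤ j ∧ j < N + k then w (j - N) else σ j) := by
  intro k
  induction k with
  | zero =>
    refine fun _ => ⟨.skip, fun σ w _ _ => ?_⟩
    convert HaltsWith.skip using 1
    funext j
    rw [if_neg (by omega)]
  | succ k ih =>
    intro hk
    obtain ⟨p, hp⟩ := ih (by omega)
    obtain ⟨q, hq⟩ := hG ⟨k, hk⟩ args (N + k) (N + k + 1) (fun i => by grind) (by omega)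
      (fun i => by grind)
    refine ⟨.seq p q, fun σ w hw hfresh => .seq _ (hp σ w hw hfresh) ?_⟩
    have hargs_eq : (fun i => if N ≤ args i ∧ args i < N + k then w (args i - N) else σ (args i)) =
        fun i => σ (args i) := by
      funext i
      exact if_neg (by have := hargs i; omega)
    convert hq (fun j => if N ≤ j ∧ j < N + k then w (j - N) else σ j) (w k)
      (hargs_eq ▸ hw ⟨k, hk⟩) (by simp [hfresh])
      (fun j hj => by rw [if_neg (by omega)]; exact hfresh j (by omega)) using 1
    funext j
    simp only [update_apply]
    split_ifs <;> first | rfl | omega | (subst_vars; congr 1; omega)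

theorem comp {m n : ℕ} {R : (Fin n → ℕ) → ℕ → Prop} {G : Fin n → (Fin m → ℕ) → ℕ → Prop}
    (hR : RegisterComputable n R) (hG : ∀ i, RegisterComputable m (G i)) :
    RegisterComputable m (fun v z => ∃ w : Fin n → ℕ, (∀ i, G i v (w i)) ∧ R w z) := by
  intro args out N hargs hout _
  obtain ⟨evalArgs, hevalArgs⟩ := exists_eval_block hG hargs n le_rfl
  obtain ⟨q, hq⟩ := hR (fun i => N + i) out (N + n) (fun i => by omega) (by omega)
    (fun i => by omega)
  obtain ⟨clean, hclean⟩ := exists_clear_block N n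
  refine ⟨.seq evalArgs (.seq q clean), ?_⟩
  rintro σ z ⟨w, hw, hz⟩ hσout hfresh
  let w' : ℕ → ℕ := fun j => if h : j < n then w ⟨j, h⟩ else 0
  have hw' : ∀ i : Fin n, w' i = w i := fun i => by simp [w']
  refine .seq _ (hevalArgs σ w' (fun i => by rw [hw']; exact hw i) hfresh)
    (.seq _ (hq _ z ?_ ?_ ?_) ?_)
  · convert hz using 2 with i
    rw [if_pos (by omega), ← hw' i, Nat.add_sub_cancel_left]
  · rw [if_neg (by omega)]
    exact hσout
  · intro j hj
    rw [if_neg (by omega)]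
    exact hfresh j (by omega)
  · convert hclean _ using 1
    funext j
    simp only [update_apply]
    split_ifs <;> first | rfl | omega | (apply hfresh; omega)

/-- The function obtained from `f` and `g` by primitive recursion, with parameters `v`. -/
def primRec {n : ℕ} (f : (Fin n → ℕ) → ℕ) (g : (Fin (n + 2) → ℕ) → ℕ) (v : Fin n → ℕ) : ℕ → ℕ
  | 0 => f v
  | k + 1 => g (Fin.cons k (Fin.cons (primRec f g v k) v))

/-- The register contents during the recursion loop: `N` holds the number of remaining rounds,
`N + 1` the current value and `N + 3` the number of completed rounds. -/
def recState (σ : ℕ → ℕ) (N remaining value done : ℕ) : ℕ → ℕ :=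
  update (update (update σ N remaining) (N + 1) value) (N + 3) done

/-- One round of the recursion loop, where `p` evaluates the step function into `N + 2`. -/
def recBody (p : Program) (N : ℕ) : Program :=
  .seq p (.seq (clear (N + 1)) (.seq (move (N + 2) (N + 1)) (.inc (N + 3))))

theorem recBody_haltsWith {n : ℕ} {g : (Fin (n + 2) → ℕ) → ℕ} {args : Fin n → ℕ} {N : ℕ}
    {p : Program} (hargs : ∀ i, args i < N)
    (hp : ∀ σ z,
      z = g (fun i => σ ((Fin.cons (N + 3) (Fin.cons (N + 1) args) : Fin (n + 2) → ℕ) i)) →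
      σ (N + 2) = 0 → (∀ j, N + 4 ≤ j → σ j = 0) → HaltsWith p σ (update σ (N + 2) z))
    {σ : ℕ → ℕ} (hfresh : ∀ j, N ≤ j → σ j = 0) (remaining value done : ℕ) :
    HaltsWith (recBody p N) (recState σ N remaining value done) (recState σ N remaining
      (g (Fin.cons done (Fin.cons value fun i => σ (args i)))) (done + 1)) := by
  have hread : (fun i => recState σ N remaining value done
      ((Fin.cons (N + 3) (Fin.cons (N + 1) args) : Fin (n + 2) → ℕ) i)) =
      Fin.cons done (Fin.cons value fun i => σ (args i)) := by
    funext i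
    refine Fin.cases (by simp [recState]) (Fin.cases (by simp [recState]) fun i => ?_) i
    have := hargs i
    simp only [recState, Fin.cons_succ]
    rw [update_of_ne (by omega), update_of_ne (by omega), update_of_ne (by omega)]
  refine .seq _ (hp _ _ (by rw [hread]) ?_ fun j hj => ?_) (.seq _ (.clear rfl)
    (.seq _ (.move (by omega) rfl) (.inc ?_)))
  · simp [recState, hfresh]
  · simp only [recState]
    rw [update_of_ne (by omega), update_of_ne (by omega), update_of_ne (by omega)]
    exact hfresh j (by omega)
  · funext j
    have := hfresh (N + 2) (by omega)
    simp only [recState, update_apply]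
    split_ifs <;> subst_vars <;> omega

theorem recLoop_haltsWith {n : ℕ} (f : (Fin n → ℕ) → ℕ) {g : (Fin (n + 2) → ℕ) → ℕ}
    {args : Fin n → ℕ} {N : ℕ} {p : Program} (hargs : ∀ i, args i < N)
    (hp : ∀ σ z,
      z = g (fun i => σ ((Fin.cons (N + 3) (Fin.cons (N + 1) args) : Fin (n + 2) → ℕ) i)) →
      σ (N + 2) = 0 → (∀ j, N + 4 ≤ j → σ j = 0) → HaltsWith p σ (update σ (N + 2) z))
    {σ : ℕ → ℕ} (hfresh : ∀ j, N ≤ j → σ j = 0) (count : ℕ) :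
    HaltsWith (.loop N (recBody p N)) (recState σ N count (primRec f g (fun i => σ (args i)) 0) 0)
      (recState σ N 0 (primRec f g (fun i => σ (args i)) count) count) := by
  refine .loop count
    (fun k => recState σ N (count - k) (primRec f g (fun i => σ (args i)) k) k) rfl (by simp)
    (fun k hk => ⟨by simp [recState]; omega, ?_⟩) (by simp [recState])
  have hdec : ∀ value, update (recState σ N (count - k) value k) N
      (recState σ N (count - k) value k N - 1) = recState σ N (count - (k + 1)) value k := by
    intro value
    funext j
    simp only [recState, update_apply]
    split_ifs <;> omega
  rw [hdec]
  exact recBody_haltsWith hargs hp hfresh _ _ k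

theorem prec {n : ℕ} {f : (Fin n → ℕ) → ℕ} {g : (Fin (n + 2) → ℕ) → ℕ}
    (hf : RegisterComputable n (fun v z => z = f v))
    (hg : RegisterComputable (n + 2) (fun v z => z = g v)) :
    RegisterComputable (n + 1) (fun v z => z = primRec f g (Fin.tail v) (v 0)) := by
  intro args out N hargs hout hne
  have hparams : ∀ i, Fin.tail args i < N := fun i => hargs i.succ
  obtain ⟨pf, hpf⟩ := hf (Fin.tail args) (N + 1) (N + 4) (fun i => by grind) (by omega)
    (fun i => by grind)
  obtain ⟨pg, hpg⟩ := hg (Fin.cons (N + 3) (Fin.cons (N + 1) (Fin.tail args))) (N + 2) (N + 4)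
    (by simp only [Fin.forall_fin_succ, Fin.cons_zero, Fin.cons_succ]; grind) (by omega)
    (by simp only [Fin.forall_fin_succ, Fin.cons_zero, Fin.cons_succ]; grind)
  refine ⟨.seq (copy (args 0) N (N + 4)) (.seq pf (.seq (.loop N (recBody pg N))
    (.seq (move (N + 1) out) (clear (N + 3))))), ?_⟩
  rintro σ z rfl hσout hfresh
  have h0 := hargs 0
  set v : Fin n → ℕ := fun i => σ (Fin.tail args i)
  have hread : (fun i => update σ N (σ N + σ (args 0)) (Fin.tail args i)) = v := by
    funext i
    exact update_of_ne (hparams i).ne _ _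
  have hinit : recState σ N (σ (args 0)) (f v) 0 =
      update (update σ N (σ N + σ (args 0))) (N + 1) (f v) := by
    funext j
    have := hfresh N le_rfl
    have := hfresh (N + 3) (by omega)
    simp only [recState, update_apply]
    split_ifs <;> subst_vars <;> omega
  refine .seq _ (.copy (by omega) (by omega) (by omega) (hfresh _ (by omega)) rfl)
    (.seq _ (hpf _ (f v) (by rw [hread]) ?_ fun j hj => ?_) (.seq _
      (hinit ▸ recLoop_haltsWith f hparams hpg hfresh (σ (args 0)))
      (.seq _ (.move (by omega) rfl) (.clear ?_))))
  · rw [update_of_ne (by omega)]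
    exact hfresh _ (by omega)
  · rw [update_of_ne (by omega)]
    exact hfresh j (by omega)
  · funext j
    have := hfresh N le_rfl
    have := hfresh (N + 1) (by omega)
    have := hfresh (N + 3) (by omega)
    have hz : primRec f g (Fin.tail fun i => σ (args i)) =
      primRec f g fun i => σ (Fin.tail args i) := rfl
    simp only [recState, update_apply, hz]
    split_ifs <;> subst_vars <;> omega

theorem rfind {n : ℕ} {f : (Fin (n + 1) → ℕ) → ℕ}
    (hf : RegisterComputable (n + 1) (fun v z => z = f v)) :
    RegisterComputable n (fun v z => f (Fin.cons z v) = 0 ∧ ∀ k < z, f (Fin.cons k v) ≠ 0) := by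
  intro args out N hargs hout hne
  obtain ⟨pf, hpf⟩ := hf (Fin.cons N args) (N + 1) (N + 2)
    (by simp only [Fin.forall_fin_succ, Fin.cons_zero, Fin.cons_succ]; grind) (by omega)
    (by simp only [Fin.forall_fin_succ, Fin.cons_zero, Fin.cons_succ]; grind)
  refine ⟨.seq pf (.seq (.loop (N + 1) (.seq (clear (N + 1)) (.seq (.inc N) pf)))
    (move N out)), ?_⟩
  rintro σ z ⟨hz, hmin⟩ hσout hfresh
  have hN := hfresh N le_rfl
  have hN1 := hfresh (N + 1) (by omega)
  set v : Fin n → ℕ := fun i => σ (args i) with hv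
  let S : ℕ → ℕ → ℕ := fun k => update (update σ N k) (N + 1) (f (Fin.cons k v))
  have htest : ∀ k, HaltsWith pf (update σ N k) (S k) := fun k => by
    refine hpf _ _ (congrArg f ?_) (by rw [update_of_ne (by omega), hN1]) fun j hj => ?_
    · funext i
      refine Fin.cases (by simp) (fun i => ?_) i
      simp [hv, update_of_ne (hargs i).ne]
    · rw [update_of_ne (by omega)]
      exact hfresh j (by omega)
  have hinit : update σ N 0 = σ := by rw [← hN, update_eq_self]
  refine .seq (S 0) (hinit ▸ htest 0)
    (.seq _ (.loop z S rfl rfl (fun k hk => ⟨by simpa [S] using hmin k hk, ?_⟩) (by simp [S, hz]))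
      (.move (by omega) ?_))
  · refine .seq _ (.clear rfl) (.seq _ (.inc rfl) ?_)
    convert htest (k + 1) using 1
    funext j
    simp only [S, update_apply]
    split_ifs <;> subst_vars <;> omega
  · funext j
    simp only [S, update_apply]
    split_ifs <;> subst_vars <;> omega

theorem of_primrec' {n} {f : List.Vector ℕ n → ℕ} (hf : Nat.Primrec' f) :
    RegisterComputable n (fun v z => z = f (List.Vector.ofFn v)) := by
  induction hf with
  | zero => exact zero
  | succ => exact succ.mono fun v z h => by simpa using h
  | get i => exact (proj i).mono fun v z h => by simpa using h
  | comp g _ _ ihf ihg =>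
    exact (ihf.comp ihg).mono fun v z h => ⟨fun i => g i (List.Vector.ofFn v), fun _ => rfl, h⟩
  | @prec n f g _ _ ihf ihg =>
    refine (ihf.prec ihg).mono fun v z h => ?_
    have hrec : ∀ k, primRec (fun v => f (List.Vector.ofFn v)) (fun v => g (List.Vector.ofFn v))
        (Fin.tail v) k = k.rec (f (List.Vector.ofFn v).tail)
          (fun y IH => g (y ::ᵥ IH ::ᵥ (List.Vector.ofFn v).tail)) := by
      intro k
      induction k with
      | zero => rfl
      | succ k ih => rw [primRec, ih]; rfl
    rw [h, hrec]
    rfl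

theorem get_mem_of_mem_mOfFn {α : Type*} {n} :
    ∀ {g : Fin n → Part α} {w : List.Vector α n}, w ∈ List.Vector.mOfFn g → ∀ i, w.get i ∈ g i := by
  induction n with
  | zero => exact fun _ i => i.elim0
  | succ n ih =>
    intro g w hw
    simp only [List.Vector.mOfFn, Part.bind_eq_bind, Part.mem_bind_iff, Part.pure_eq_some,
      Part.mem_some_iff] at hw
    obtain ⟨a, ha, v, hv, rfl⟩ := hw
    exact Fin.cases (by simpa using ha) fun i => by simpa using ih hv i

theorem of_partrec' {n} {f : List.Vector ℕ n →. ℕ} (hf : Nat.Partrec' f) :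
    RegisterComputable n (fun v z => z ∈ f (List.Vector.ofFn v)) := by
  induction hf with
  | prim hf => exact (of_primrec' hf).mono fun v z h => by simpa using h
  | comp g _ _ ihf ihg =>
    refine (ihf.comp ihg).mono fun v z h => ?_
    obtain ⟨w, hw, hz⟩ := Part.mem_bind_iff.1 h
    exact ⟨w.get, get_mem_of_mem_mOfFn hw, by simpa using hz⟩
  | @rfind n f _ ih =>
    have htotal : RegisterComputable (n + 1) (fun v z => z = f (List.Vector.ofFn v)) :=
      ih.mono fun v z h => by simpa using h
    refine htotal.rfind.mono fun v z h => ?_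
    obtain ⟨hz, hmin⟩ := Nat.mem_rfind.1 h
    have hcons : ∀ k, List.Vector.ofFn (Fin.cons k v : Fin (n + 1) → ℕ) =
        k ::ᵥ List.Vector.ofFn v := fun k => by simp [List.Vector.ofFn]
    exact ⟨by simpa [hcons] using hz, fun k hk => by simpa [hcons] using hmin hk⟩

end RegisterComputable

/-- The register contents with `n` in register `0` and zeros elsewhere. -/
def inputState (n : ℕ) : ℕ → ℕ := update (fun _ => 0) 0 n

theorem exists_program_of_partrec {φ : ℕ →. ℕ} (hφ : Partrec φ) :
    ∃ p : Program, ∀ n z, z ∈ φ n → HaltsWith p (inputState n) (update (inputState n) 1 z) := by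
  obtain ⟨p, hp⟩ := RegisterComputable.of_partrec' (Nat.Partrec'.part_iff₁.2 hφ) (fun _ => 0) 1 2
    (by simp) (by simp) (by simp)
  refine ⟨p, fun n z hz => hp _ z (by simpa [inputState] using hz) (by simp [inputState]) ?_⟩
  exact fun j hj => update_of_ne (by omega) _ _

/-! ### Removing the probability space -/

section Probability

variable {Ω α β : Type} {p : Ω → ℝ}

theorem eq_zero_of_notMem_of_pr_eq_one (hp : IsProb p) {S : Set Ω} (hS : Pr p S = 1) {ω : Ω}
    (hω : ω ∉ S) : p ω = 0 := by
  obtain ⟨p_nonneg, p_univ⟩ := hp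
  rw [Pr, tsum_univ p] at p_univ
  have p_summable : Summable p := by
    by_contra h
    exact zero_ne_one ((tsum_eq_zero_of_not_summable h).symm.trans p_univ)
  have compl_eq_zero : ∑' ω : ↑Sᶜ, p ω = 0 := by
    have := p_summable.tsum_subtype_add_tsum_subtype_compl S
    rw [Pr] at hS
    linarith
  have compl_hasSum : HasSum (fun ω : ↑Sᶜ => p ω) 0 :=
    compl_eq_zero ▸ (p_summable.subtype Sᶜ).hasSum
  exact congrFun ((hasSum_zero_iff_of_nonneg fun ω : ↑Sᶜ => p_nonneg ω).1 compl_hasSum) ⟨ω, hω⟩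

theorem exists_mem_of_pr_ne_zero {S : Set Ω} (hS : Pr p S ≠ 0) : ∃ ω ∈ S, p ω ≠ 0 := by
  by_contra! h
  exact hS ((tsum_congr fun ω : S => h ω ω.2).trans tsum_zero)

theorem eq_of_funcOf (hp : IsProb p) {X : Ω → α} {Y : Ω → β} (h : FuncOf p X Y) {ω ω' : Ω}
    (hω : p ω ≠ 0) (hω' : p ω' ≠ 0) (hY : Y ω = Y ω') : X ω = X ω' := by
  obtain ⟨f, hf⟩ := h
  have X_eq {ω : Ω} (hω : p ω ≠ 0) : X ω = f (Y ω) :=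
    not_imp_comm.1 (eq_zero_of_notMem_of_pr_eq_one hp hf) hω
  rw [X_eq hω, X_eq hω', hY]

theorem funcOf_of_forall_eq (hp : IsProb p) [Nonempty α] {X : Ω → α} {Y : Ω → β}
    (h : ∀ ω ω', Y ω = Y ω' → X ω = X ω') : FuncOf p X Y := by
  have hX : X.FactorsThrough Y := fun ω ω' => h ω ω'
  refine ⟨Function.extend Y X fun _ => Classical.arbitrary α, ?_⟩
  have event_eq : {ω | X ω = Function.extend Y X (fun _ => Classical.arbitrary α) (Y ω)} =
      Set.univ := Set.eq_univ_of_forall fun ω => (hX.extend_apply _ ω).symm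
  rw [event_eq, hp.2]

theorem isProb_uniform (q s : ℕ) (hq : 0 < q) :
    IsProb fun _ : Fin s → Fin q => ((q : ℝ))⁻¹ ^ s := by
  refine ⟨fun _ => by positivity, ?_⟩
  rw [Pr, tsum_univ fun _ : Fin s → Fin q => ((q : ℝ))⁻¹ ^ s, tsum_fintype]
  simp [hq.ne']

end Probability

/-- A network code without probability space: the signals are functions of the message vector, and
at each node the inputs determine the demanded messages and the outgoing signals. Message vectors
are indexed by `ℕ`; only the entries with indices below the number of messages matter. -/
def IsDeterministicSolution {T : Type} (net : Network) (X : ℕ → (ℕ → T) → T) : Prop :=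
  match net with
  | (n, _, edges, acc, dem) =>
    ∀ v < n, ∀ m m' : ℕ → T, (∀ i ∈ acc.getD v [], m i = m' i) →
      (∀ e ∈ inEdges edges v, X e m = X e m') →
      (∀ i ∈ dem.getD v [], m i = m' i) ∧ ∀ e ∈ outEdges edges v, X e m = X e m'

theorem forall_mem_getD_of_forall_mem {α : Type} {l : List (List α)} {P : α → Prop}
    (h : ∀ a ∈ l, ∀ i ∈ a, P i) (v : ℕ) : ∀ i ∈ l.getD v [], P i := by
  rcases lt_or_ge v l.length with hv | hv
  · rw [List.getD_eq_getElem _ _ hv]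
    exact h _ (List.getElem_mem hv)
  · simp [hv]

theorem exists_isDeterministicSolution {net : Network} (hnet : NetworkValid net) {q : ℕ}
    (hq : 0 < q) (h : SolvableWith net q) :
    ∃ X : ℕ → (ℕ → Fin q) → Fin q, IsDeterministicSolution net X := by
  obtain ⟨n, s, edges, acc, dem⟩ := net
  obtain ⟨-, -, -, -, acc_lt, dem_lt⟩ := hnet
  obtain ⟨Ω, p, hp, M, X, uniform, coding⟩ := h
  have attained (m : ℕ → Fin q) : ∃ ω ∈ {ω | ∀ i < s, M i ω = m i}, p ω ≠ 0 :=
    exists_mem_of_pr_ne_zero (by rw [uniform]; positivity)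
  choose outcome outcome_message outcome_ne_zero using attained
  refine ⟨fun e m => X e (outcome m), fun v hv m m' acc_eq in_eq => ?_⟩
  have inputs_eq : (((acc.getD v []).map fun i => M i (outcome m)),
        (inEdges edges v).map fun e => X e (outcome m)) =
      (((acc.getD v []).map fun i => M i (outcome m')),
        (inEdges edges v).map fun e => X e (outcome m')) := by
    refine Prod.ext (List.map_congr_left fun i hi => ?_) (List.map_congr_left in_eq)
    have i_lt := forall_mem_getD_of_forall_mem acc_lt v i hi
    rw [outcome_message m i i_lt, outcome_message m' i i_lt, acc_eq i hi]
  obtain ⟨dem_eq, out_eq⟩ := Prod.ext_iff.1 <|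
    eq_of_funcOf hp (coding v hv) (outcome_ne_zero m) (outcome_ne_zero m') inputs_eq
  refine ⟨fun i hi => ?_, List.map_inj_left.1 out_eq⟩
  have i_lt := forall_mem_getD_of_forall_mem dem_lt v i hi
  rw [← outcome_message m i i_lt, ← outcome_message m' i i_lt]
  exact List.map_inj_left.1 dem_eq i hi

theorem solvableWith_of_isDeterministicSolution {net : Network} {q : ℕ} (hq : 0 < q)
    {X : ℕ → (ℕ → Fin q) → Fin q} (hX : IsDeterministicSolution net X) : SolvableWith net q := by
  obtain ⟨n, s, edges, acc, dem⟩ := net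
  let message (i : ℕ) (ω : Fin s → Fin q) : Fin q := if h : i < s then ω ⟨i, h⟩ else ⟨0, hq⟩
  have hp := isProb_uniform q s hq
  refine ⟨Fin s → Fin q, _, hp, message, fun e ω => X e (message · ω), fun m => ?_,
    fun v hv => ?_⟩
  · have event_eq : {ω | ∀ i < s, message i ω = m i} = {fun i : Fin s => m i} := by
      ext ω
      simp only [message, Set.mem_ofPred_eq, Set.mem_singleton_iff, funext_iff, Fin.forall_iff]
      exact forall₂_congr fun i hi => by rw [dif_pos hi]
    rw [event_eq, Pr, tsum_fintype]
    simp
  · refine funcOf_of_forall_eq hp fun ω ω' inputs_eq => ?_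
    obtain ⟨acc_eq, in_eq⟩ := Prod.ext_iff.1 inputs_eq
    obtain ⟨dem_eq, out_eq⟩ := hX v hv (message · ω) (message · ω')
      (List.map_inj_left.1 acc_eq) (List.map_inj_left.1 in_eq)
    exact Prod.ext (List.map_congr_left dem_eq) (List.map_congr_left out_eq)

/-! ### Systems of consumers -/

/-- A consumer with access to the messages in the first list and to the signals in the second list,
demanding the messages in the third list. -/
abbrev Consumer (s : ℕ) : Type := List (Fin s) × List ℕ × List (Fin s)

/-- In a system `L` of consumers, the consumers `0, …, E - 1` emit the signals `0, …, E - 1`. A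
solution makes each signal a function of the inputs of its emitter, and lets each consumer recover
the messages it demands. -/
structure IsSolution {s : ℕ} {T : Type} (E : ℕ) (L : List (Consumer s))
    (X : ℕ → (Fin s → T) → T) : Prop where
  emit : ∀ t < E, ∀ u v, (∀ i ∈ (L.getD t default).1, u i = v i) →
    (∀ j ∈ (L.getD t default).2.1, X j u = X j v) → X t u = X t v
  decode : ∀ c ∈ L, ∀ u v, (∀ i ∈ c.1, u i = v i) → (∀ j ∈ c.2.1, X j u = X j v) →
    ∀ i ∈ c.2.2, u i = v i

/-- Every emitter belongs to the system and every consumer uses previously emitted signals. -/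
structure IsCausal {s : ℕ} (E : ℕ) (L : List (Consumer s)) : Prop where
  le_length : E ≤ L.length
  lt : ∀ t, ∀ j ∈ (L.getD t default).2.1, j < t ∧ j < E

/-- Node `2 * t` is the consumer `t`, node `2 * j + 1` is a relay that receives the signal `j` from
its emitter along the edge `j` and passes it on to the consumers that use it. -/
def systemEdges {s : ℕ} (E : ℕ) (L : List (Consumer s)) : List (ℕ × ℕ) :=
  (List.range E).map (fun j => (2 * j, 2 * j + 1)) ++
    (List.range L.length).flatMap fun t =>
      (L.getD t default).2.1.map fun j => (2 * j + 1, 2 * t)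

/-- The network realising a system of consumers: the relays have access to no message and demand
none. -/
def systemNetwork {s : ℕ} (E : ℕ) (L : List (Consumer s)) : Network :=
  (2 * L.length, s, systemEdges E L,
    L.flatMap fun c => [c.1.map Fin.val, []], L.flatMap fun c => [c.2.2.map Fin.val, []])

section System

variable {s E : ℕ} {L : List (Consumer s)}

theorem lt_length_of_mem_signals {t j : ℕ} (hj : j ∈ (L.getD t default).2.1) : t < L.length := by
  by_contra ht
  rw [List.getD_eq_default _ _ (not_lt.1 ht)] at hj
  exact List.not_mem_nil hj

theorem mem_systemEdges {d : ℕ × ℕ} : d ∈ systemEdges E L ↔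
    (∃ j < E, d = (2 * j, 2 * j + 1)) ∨
      ∃ t, ∃ j ∈ (L.getD t default).2.1, d = (2 * j + 1, 2 * t) := by
  simp only [systemEdges, List.mem_append, List.mem_map, List.mem_range, List.mem_flatMap, eq_comm]
  refine or_congr_right (exists_congr fun t => and_iff_right_of_imp ?_)
  rintro ⟨j, hj, -⟩
  exact lt_length_of_mem_signals hj

theorem systemNetwork_valid (h : IsCausal E L) : NetworkValid (systemNetwork E L) := by
  have le_length := h.le_length
  have values_lt (f : Consumer s → List (Fin s)) :
      ∀ l ∈ L.flatMap fun c => [(f c).map Fin.val, []], ∀ i ∈ l, i < s := by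
    simp only [List.mem_flatMap, List.mem_cons, List.not_mem_nil, or_false]
    rintro l ⟨c, -, rfl | rfl⟩ <;> simp
  refine ⟨fun d hd => ?_, ⟨id, fun d hd => ?_⟩, by simp [mul_comm], by simp [mul_comm],
    values_lt (·.1), values_lt (·.2.2)⟩
  · obtain ⟨j, hj, rfl⟩ | ⟨t, j, hj, rfl⟩ := mem_systemEdges.1 hd
    · grind
    · grind [h.lt t j hj, lt_length_of_mem_signals hj]
  · obtain ⟨j, -, rfl⟩ | ⟨t, j, hj, rfl⟩ := mem_systemEdges.1 hd
    · simp
    · grind [h.lt t j hj]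

theorem mem_inEdges {l : List (ℕ × ℕ)} {v e : ℕ} :
    e ∈ inEdges l v ↔ e < l.length ∧ (l.getD e (0, 0)).2 = v := by
  simp [inEdges]

theorem mem_outEdges {l : List (ℕ × ℕ)} {v e : ℕ} :
    e ∈ outEdges l v ↔ e < l.length ∧ (l.getD e (0, 0)).1 = v := by
  simp [outEdges]

theorem lt_length_systemEdges {j : ℕ} (hj : j < E) : j < (systemEdges E L).length := by
  simp only [systemEdges, List.length_append, List.length_map, List.length_range]
  omega

theorem systemEdges_getD_of_lt {j : ℕ} (hj : j < E) :
    (systemEdges E L).getD j (0, 0) = (2 * j, 2 * j + 1) := by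
  simp [systemEdges, List.getElem?_append, hj]

theorem systemEdges_getD_cases {e : ℕ} (he : e < (systemEdges E L).length) :
    (e < E ∧ (systemEdges E L).getD e (0, 0) = (2 * e, 2 * e + 1)) ∨
      ∃ t, ∃ j ∈ (L.getD t default).2.1, (systemEdges E L).getD e (0, 0) = (2 * j + 1, 2 * t) := by
  rcases lt_or_ge e E with hE | hE
  · exact .inl ⟨hE, systemEdges_getD_of_lt hE⟩
  · have hmem := List.getElem_mem (l := (systemEdges E L).drop E) (n := e - E)
      (by rw [List.length_drop]; omega)
    have drop_eq : (systemEdges E L).drop E = (List.range L.length).flatMap fun t =>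
        (L.getD t default).2.1.map fun j => (2 * j + 1, 2 * t) := List.drop_left' (by simp)
    simp only [List.getElem_drop, Nat.add_sub_cancel' hE] at hmem
    simp only [drop_eq, List.mem_flatMap, List.mem_map] at hmem
    obtain ⟨t, -, j, hj, h⟩ := hmem
    exact .inr ⟨t, j, hj, (List.getD_eq_getElem _ _ he).trans h.symm⟩

theorem mem_outEdges_emitter {j : ℕ} (hj : j < E) : j ∈ outEdges (systemEdges E L) (2 * j) := by
  rw [mem_outEdges, systemEdges_getD_of_lt hj]
  exact ⟨lt_length_systemEdges hj, rfl⟩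

theorem lt_of_mem_outEdges_consumer {t e : ℕ} (he : e ∈ outEdges (systemEdges E L) (2 * t)) :
    t < E := by
  obtain ⟨he, source⟩ := mem_outEdges.1 he
  grind [systemEdges_getD_cases he]

theorem mem_inEdges_relay {j : ℕ} (hj : j < E) : j ∈ inEdges (systemEdges E L) (2 * j + 1) := by
  rw [mem_inEdges, systemEdges_getD_of_lt hj]
  exact ⟨lt_length_systemEdges hj, rfl⟩

theorem eq_of_mem_inEdges_relay {j e : ℕ} (he : e ∈ inEdges (systemEdges E L) (2 * j + 1)) :
    e = j := by
  obtain ⟨he, target⟩ := mem_inEdges.1 he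
  grind [systemEdges_getD_cases he]

theorem exists_mem_inEdges_consumer {t j : ℕ} (hj : j ∈ (L.getD t default).2.1) :
    ∃ e ∈ inEdges (systemEdges E L) (2 * t), e ∈ outEdges (systemEdges E L) (2 * j + 1) := by
  obtain ⟨e, he, h⟩ := List.getElem_of_mem (mem_systemEdges.2 (.inr ⟨t, j, hj, rfl⟩) :
    (2 * j + 1, 2 * t) ∈ systemEdges E L)
  refine ⟨e, mem_inEdges.2 ⟨he, ?_⟩, mem_outEdges.2 ⟨he, ?_⟩⟩ <;>
    rw [List.getD_eq_getElem _ _ he, h]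

theorem exists_relay_of_mem_inEdges_consumer {t e : ℕ}
    (he : e ∈ inEdges (systemEdges E L) (2 * t)) :
    ∃ j ∈ (L.getD t default).2.1, e ∈ outEdges (systemEdges E L) (2 * j + 1) := by
  obtain ⟨he_lt, target⟩ := mem_inEdges.1 he
  obtain ⟨-, h⟩ | ⟨t', j, hj, h⟩ := systemEdges_getD_cases he_lt
  · grind
  · obtain rfl : t' = t := by grind
    exact ⟨j, hj, mem_outEdges.2 ⟨he_lt, by rw [h]⟩⟩

theorem exists_consumer_of_mem_outEdges_relay {j e : ℕ}
    (he : e ∈ outEdges (systemEdges E L) (2 * j + 1)) : ∃ t, j ∈ (L.getD t default).2.1 := by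
  obtain ⟨he, source⟩ := mem_outEdges.1 he
  obtain ⟨-, h⟩ | ⟨t, j', hj, h⟩ := systemEdges_getD_cases he
  · grind
  · obtain rfl : j' = j := by grind
    exact ⟨t, hj⟩

theorem getD_flatMap_pair {α β : Type} [Inhabited α] (f : α → List β) (hf : f default = [])
    (l : List α) (t : ℕ) :
    (l.flatMap fun c => [f c, []]).getD (2 * t) [] = f (l.getD t default) ∧
      (l.flatMap fun c => [f c, []]).getD (2 * t + 1) [] = [] := by
  induction l generalizing t with
  | nil => simp [hf]
  | cons c l ih =>
    cases t with
    | zero => simp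
    | succ t => simpa [Nat.mul_succ] using ih t

theorem isDeterministicSolution_systemNetwork_iff {T : Type} {X : ℕ → (ℕ → T) → T} :
    IsDeterministicSolution (systemNetwork E L) X ↔
      (∀ t < L.length, ∀ m m' : ℕ → T, (∀ i ∈ (L.getD t default).1, m i = m' i) →
        (∀ e ∈ inEdges (systemEdges E L) (2 * t), X e m = X e m') →
        (∀ i ∈ (L.getD t default).2.2, m i = m' i) ∧
          ∀ e ∈ outEdges (systemEdges E L) (2 * t), X e m = X e m') ∧
      ∀ j < L.length, ∀ m m' : ℕ → T,
        (∀ e ∈ inEdges (systemEdges E L) (2 * j + 1), X e m = X e m') →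
          ∀ e ∈ outEdges (systemEdges E L) (2 * j + 1), X e m = X e m' := by
  have access := getD_flatMap_pair (fun c : Consumer s => c.1.map Fin.val) rfl L
  have demand := getD_flatMap_pair (fun c : Consumer s => c.2.2.map Fin.val) rfl L
  constructor
  · intro h
    refine ⟨fun t ht => ?_, fun j hj => ?_⟩
    · simpa [-List.getD_eq_getElem?_getD, (access t).1, (demand t).1] using h (2 * t) (by omega)
    · simpa [-List.getD_eq_getElem?_getD, (access j).2, (demand j).2] using h (2 * j + 1) (by omega)
  · rintro ⟨consumers, relays⟩ v hv
    obtain ⟨t, rfl | rfl⟩ := Nat.even_or_odd' v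
    · simpa [-List.getD_eq_getElem?_getD, (access t).1, (demand t).1] using consumers t (by omega)
    · simpa [-List.getD_eq_getElem?_getD, (access t).2, (demand t).2] using relays t (by omega)

theorem exists_isSolution {T : Type} [Nonempty T] (hL : IsCausal E L) {Y : ℕ → (ℕ → T) → T}
    (hY : IsDeterministicSolution (systemNetwork E L) Y) :
    ∃ X : ℕ → (Fin s → T) → T, IsSolution E L X := by
  obtain ⟨consumers, relays⟩ := isDeterministicSolution_systemNetwork_iff.1 hY
  let extend (m : Fin s → T) : ℕ → T := fun i =>
    if h : i < s then m ⟨i, h⟩ else Classical.arbitrary T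
  have extend_val (m : Fin s → T) (i : Fin s) : extend m i = m i := by simp [extend]
  have in_eq {t : ℕ} {m m' : Fin s → T}
      (h : ∀ j ∈ (L.getD t default).2.1, Y j (extend m) = Y j (extend m')) :
      ∀ e ∈ inEdges (systemEdges E L) (2 * t), Y e (extend m) = Y e (extend m') := by
    intro e he
    obtain ⟨j, hj, he⟩ := exists_relay_of_mem_inEdges_consumer he
    refine relays j ((hL.lt t j hj).2.trans_le hL.le_length) _ _ (fun e' he' => ?_) e he
    rw [eq_of_mem_inEdges_relay he']
    exact h j hj
  refine ⟨fun j m => Y j (extend m), fun t ht m m' access_eq signal_eq => ?_,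
    fun c hc m m' access_eq signal_eq i hi => ?_⟩
  · exact (consumers t (ht.trans_le hL.le_length) _ _ (by simpa only [extend_val] using access_eq)
      (in_eq signal_eq)).2 t (mem_outEdges_emitter ht)
  · obtain ⟨t, ht, rfl⟩ := List.getElem_of_mem hc
    rw [← List.getD_eq_getElem _ default ht] at access_eq signal_eq hi
    simpa only [extend_val] using (consumers t ht _ _ (by simpa only [extend_val] using access_eq)
      (in_eq signal_eq)).1 i hi

/-- The signal carried by an edge is the one of the consumer or relay that it leaves. -/
theorem isDeterministicSolution_of_isSolution {T : Type} (hL : IsCausal E L)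
    {X : ℕ → (Fin s → T) → T} (hX : IsSolution E L X) :
    IsDeterministicSolution (systemNetwork E L)
      fun e m => X (((systemEdges E L).getD e (0, 0)).1 / 2) fun i => m i := by
  have carried {v e : ℕ} (he : e ∈ outEdges (systemEdges E L) v) :
      ((systemEdges E L).getD e (0, 0)).1 / 2 = v / 2 := by rw [(mem_outEdges.1 he).2]
  refine isDeterministicSolution_systemNetwork_iff.2
    ⟨fun t ht m m' access_eq in_eq => ?_, fun j _ m m' in_eq e he => ?_⟩
  · have signal_eq : ∀ j ∈ (L.getD t default).2.1,
        X j (fun i => m i) = X j (fun i => m' i) := by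
      intro j hj
      obtain ⟨e, he, he'⟩ := exists_mem_inEdges_consumer (E := E) hj
      have := in_eq e he
      rwa [carried he', show (2 * j + 1) / 2 = j by omega] at this
    refine ⟨?_, fun e he => ?_⟩
    · have hc : L.getD t default ∈ L := by
        rw [List.getD_eq_getElem _ _ ht]; exact List.getElem_mem ht
      exact hX.decode _ hc _ _ access_eq signal_eq
    · rw [carried he, Nat.mul_div_cancel_left _ two_pos]
      exact hX.emit t (lt_of_mem_outEdges_consumer he) _ _ access_eq signal_eq
  · obtain ⟨t, hjt⟩ := exists_consumer_of_mem_outEdges_relay he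
    have hjE := (hL.lt t j hjt).2
    have := in_eq j (mem_inEdges_relay hjE)
    rwa [carried (mem_outEdges_emitter hjE), Nat.mul_div_cancel_left _ two_pos,
      show j = (2 * j + 1) / 2 by omega, ← carried he] at this

theorem solvableWith_systemNetwork_iff {q : ℕ} (hq : 0 < q) (hL : IsCausal E L) :
    SolvableWith (systemNetwork E L) q ↔ ∃ X : ℕ → (Fin s → Fin q) → Fin q, IsSolution E L X := by
  have : Nonempty (Fin q) := ⟨⟨0, hq⟩⟩
  refine ⟨fun h => ?_, fun ⟨X, hX⟩ =>
    solvableWith_of_isDeterministicSolution hq (isDeterministicSolution_of_isSolution hL hX)⟩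
  obtain ⟨Y, hY⟩ := exists_isDeterministicSolution (systemNetwork_valid hL) hq h
  exact exists_isSolution hL hY

theorem isCausal_append {emitters sinks : List (Consumer s)}
    (emitters_lt : ∀ t < emitters.length, ∀ j ∈ (emitters.getD t default).2.1, j < t)
    (sinks_lt : ∀ c ∈ sinks, ∀ j ∈ c.2.1, j < emitters.length) :
    IsCausal emitters.length (emitters ++ sinks) := by
  refine ⟨by simp, fun t j hj => ?_⟩
  rcases lt_or_ge t emitters.length with ht | ht
  · rw [List.getD_append _ _ _ _ ht] at hj
    have := emitters_lt t ht j hj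
    omega
  · have ht' := lt_length_of_mem_signals hj
    rw [List.getD_append_right _ _ _ _ ht, List.getD_eq_getElem _ _ (by grind)] at hj
    have := sinks_lt _ (List.getElem_mem _) j hj
    omega

theorem isSolution_append_iff {T : Type} {emitters sinks : List (Consumer s)}
    (no_demand : ∀ c ∈ emitters, c.2.2 = []) {X : ℕ → (Fin s → T) → T} :
    IsSolution emitters.length (emitters ++ sinks) X ↔
      (∀ t < emitters.length, ∀ m m', (∀ i ∈ (emitters.getD t default).1, m i = m' i) →
        (∀ j ∈ (emitters.getD t default).2.1, X j m = X j m') → X t m = X t m') ∧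
      ∀ c ∈ sinks, ∀ m m', (∀ i ∈ c.1, m i = m' i) → (∀ j ∈ c.2.1, X j m = X j m') →
        ∀ i ∈ c.2.2, m i = m' i := by
  constructor
  · refine fun h => ⟨fun t ht => ?_, fun c hc => h.decode c (List.mem_append_right _ hc)⟩
    rw [← List.getD_append _ _ _ _ ht]
    exact h.emit t ht
  · rintro ⟨emit, decode⟩
    refine ⟨fun t ht => ?_, fun c hc => ?_⟩
    · rw [List.getD_append _ _ _ _ ht]
      exact emit t ht
    · rcases List.mem_append.1 hc with hc | hc
      · simp [no_demand c hc]
      · exact decode c hc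

theorem exists_isSolution_of_equiv {T T' : Type} (ε : T ≃ T') {X : ℕ → (Fin s → T) → T}
    (hX : IsSolution E L X) : ∃ X' : ℕ → (Fin s → T') → T', IsSolution E L X' := by
  refine ⟨fun t m => ε (X t (ε.symm ∘ m)), fun t ht m m' access_eq signal_eq => ?_,
    fun c hc m m' access_eq signal_eq i hi => ?_⟩
  · exact congrArg ε <| hX.emit t ht _ _ (fun i hi => congrArg ε.symm (access_eq i hi))
      fun j hj => ε.injective (signal_eq j hj)
  · exact ε.symm.injective <| hX.decode c hc _ _ (fun i hi => congrArg ε.symm (access_eq i hi))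
      (fun j hj => ε.injective (signal_eq j hj)) i hi

end System

/-! ### Operators encoded by signals -/

/-- Signals `x f a b`, `y f b c`, `z f a c` that behave like `a - f b`, `b - f c`, `a - f c` for
operators `f` on `T`, where `one` is the identity and `C f g h` means `f * g = h`. -/
structure IsOperatorGadget {ι T : Type} (one : ι) (C : ι → ι → ι → Prop)
    (x y z : ι → T → T → T) : Prop where
  mul_one (f : ι) : C f one f
  one_mul (f : ι) : C one f f
  comp {f g h : ι} {a b c a' b' c' : T} : C f g h → x f a b = x f a' b' →
    y g b c = y g b' c' → z h a c = z h a' c'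
  z_injective (f : ι) (c : T) : (z f · c).Injective
  z_one_injective (a : T) : (z one a).Injective
  x_one_injective (a : T) : (x one a).Injective

namespace IsOperatorGadget

variable {ι T : Type} [Finite T] {one : ι} {C : ι → ι → ι → Prop} {x y z : ι → T → T → T}
  (G : IsOperatorGadget one C x y z)

include G

theorem z_surjective (f : ι) (c : T) : (z f · c).Surjective :=
  Finite.surjective_of_injective (G.z_injective f c)

theorem z_one_surjective (a : T) : (z one a).Surjective :=
  Finite.surjective_of_injective (G.z_one_injective a)

theorem x_one_surjective (a : T) : (x one a).Surjective :=
  Finite.surjective_of_injective (G.x_one_injective a)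

theorem x_surjective (f : ι) (b : T) : (x f · b).Surjective :=
  Finite.surjective_of_injective fun _ _ h => G.z_injective f b (G.comp (G.mul_one f) h rfl)

theorem y_injective (f : ι) (c : T) : (y f · c).Injective := by
  intro b b' h
  obtain ⟨a, ha⟩ := G.x_surjective one b' (x one b b)
  obtain rfl := G.z_injective f c (G.comp (G.one_mul f) ha h.symm)
  exact (G.x_one_injective a ha).symm

theorem y_surjective (f : ι) (c : T) : (y f · c).Surjective :=
  Finite.surjective_of_injective (G.y_injective f c)

theorem y_eq_of_x_one_eq_of_z_eq {f : ι} {a a' b b' c c' : T} (hx : x one a b = x one a' b')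
    (hz : z f a c = z f a' c') : y f b c = y f b' c' := by
  obtain ⟨b₁, hb₁⟩ := G.y_surjective f c' (y f b c)
  obtain ⟨a₁, ha₁⟩ := G.x_surjective one b₁ (x one a b)
  obtain rfl := G.z_injective f c' ((G.comp (G.one_mul f) ha₁ hb₁).trans hz)
  rw [← hb₁, G.x_one_injective a₁ (ha₁.trans hx)]

/-- Modelled on `f c - f c' = a - a' = a₁ - a₁'`. -/
theorem z_eq_of_z_eq {f g : ι} {a a' a₁ a₁' c c' d d' : T} (hf : z f a c = z f a' c')
    (hg : z g a d = z g a' d') (hf₁ : z f a₁ c = z f a₁' c') : z g a₁ d = z g a₁' d' := by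
  obtain ⟨b, hb⟩ := G.x_one_surjective a' (x one a a)
  have hyf := G.y_eq_of_x_one_eq_of_z_eq hb.symm hf
  have hyg := G.y_eq_of_x_one_eq_of_z_eq hb.symm hg
  obtain ⟨a₂, ha₂⟩ := G.x_surjective one b (x one a₁ a)
  obtain rfl := G.z_injective f c' ((G.comp (G.one_mul f) ha₂.symm hyf).symm.trans hf₁)
  exact G.comp (G.one_mul g) ha₂.symm hyg

theorem exists_z_one_eq (o : T) (f : ι) (c : T) :
    ∃ e, ∀ a a', z f a c = z f a' o → z one a e = z one a' o := by
  obtain ⟨a', ha'⟩ := G.z_surjective f o (z f o c)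
  obtain ⟨e, he⟩ := G.z_one_surjective o (z one a' o)
  exact ⟨e, fun _ _ h => G.z_eq_of_z_eq ha'.symm he h⟩

/-- The operator on `T` encoded by the index `f`, normalised to fix `o`. -/
def operator (o : T) (f : ι) (c : T) : T :=
  (G.exists_z_one_eq o f c).choose

variable {o : T}

theorem z_one_operator {f : ι} {a a' c : T} (h : z f a c = z f a' o) :
    z one a (G.operator o f c) = z one a' o :=
  (G.exists_z_one_eq o f c).choose_spec a a' h

theorem exists_z_eq_z_base (f : ι) (a c : T) : ∃ a', z f a c = z f a' o :=
  (G.z_surjective f o (z f a c)).imp fun _ h => h.symm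

theorem operator_base (f : ι) : G.operator o f o = o :=
  G.z_one_injective o (G.z_one_operator rfl)

theorem operator_one (c : T) : G.operator o one c = c := by
  obtain ⟨a', h⟩ := G.exists_z_eq_z_base (o := o) one o c
  exact G.z_one_injective o ((G.z_one_operator h).trans h.symm)

theorem operator_comp {f g h : ι} (hC : C f g h) (c : T) :
    G.operator o h c = G.operator o f (G.operator o g c) := by
  obtain ⟨a', hg⟩ := G.exists_z_eq_z_base (o := o) g o c
  obtain ⟨b, hb⟩ := G.x_one_surjective a' (x one o o)
  have hyg := G.y_eq_of_x_one_eq_of_z_eq hb.symm hg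
  have hy := G.y_eq_of_x_one_eq_of_z_eq hb.symm (G.z_one_operator hg)
  obtain ⟨a₁, ha₁⟩ := G.x_surjective f b (x f o o)
  have hzf := G.comp (G.mul_one f) ha₁.symm hy
  have hzh := G.comp hC ha₁.symm hyg
  exact G.z_one_injective o ((G.z_one_operator hzh).trans (G.z_one_operator hzf).symm)

theorem operator_eq_base {f : ι} (h : ∀ a c c', z f a c = z f a c') (c : T) :
    G.operator o f c = o :=
  G.z_one_injective o (G.z_one_operator (h o c o))

theorem z_eq_of_operator_eq {f : ι} {c c' : T} (h : G.operator o f c = G.operator o f c') :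
    z f o c = z f o c' := by
  obtain ⟨a, ha⟩ := G.exists_z_eq_z_base (o := o) f o c
  obtain ⟨a', ha'⟩ := G.exists_z_eq_z_base (o := o) f o c'
  have hz : z one a o = z one a' o := by
    rw [← G.z_one_operator ha, h, G.z_one_operator ha']
  rw [ha, ha', G.z_injective one o hz]

theorem eq_of_forall_operator_eq {F : Set ι}
    (hF : ∀ a b b', (∀ f ∈ F, x f a b = x f a b') → b = b') {c c' : T}
    (h : ∀ f ∈ F, G.operator o f c = G.operator o f c') : c = c' := by
  obtain ⟨b, hb⟩ := G.y_surjective one c' (y one o c)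
  obtain rfl : b = o := hF o b o fun f hf => by
    obtain ⟨a, ha⟩ := G.x_surjective f b (x f o o)
    have hz : z f a c' = z f o c' :=
      (G.comp (G.mul_one f) ha hb).trans (G.z_eq_of_operator_eq (h f hf))
    rw [← ha, G.z_injective f c' hz]
  exact G.z_one_injective b (G.comp (G.mul_one one) rfl hb.symm)

end IsOperatorGadget

/-! ### Equations between operators as networks -/

/-- Conditions on operators `E 0, …, E (size - 1)`, where `E 0` is the identity: `(f, g, h)` in
`comps` requires `E h = E f ∘ E g`, `h` in `zeros` requires `E h` to be constant, and `F` in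
`covers` requires the operators with indices in `F` to be jointly injective. -/
structure OperatorEquations where
  size : ℕ
  comps : List (ℕ × ℕ × ℕ)
  zeros : List ℕ
  covers : List (List ℕ)

namespace OperatorEquations

variable (Q : OperatorEquations)

/-- The indices occurring in the equations are those of operators. -/
structure WellFormed : Prop where
  pos : 0 < Q.size
  comps_lt : ∀ c ∈ Q.comps, c.1 < Q.size ∧ c.2.1 < Q.size ∧ c.2.2 < Q.size
  zeros_lt : ∀ h ∈ Q.zeros, h < Q.size
  covers_lt : ∀ F ∈ Q.covers, ∀ f ∈ F, f < Q.size

/-- The maps `E` solve the equations and fix the base point `o`. -/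
structure IsRealization {A : Type} (o : A) (E : ℕ → A → A) : Prop where
  base : ∀ f < Q.size, E f o = o
  one : ∀ c, E 0 c = c
  comp : ∀ f g h, (f, g, h) ∈ Q.comps → ∀ c, E h c = E f (E g c)
  zero : ∀ h ∈ Q.zeros, ∀ c, E h c = o
  cover : ∀ F ∈ Q.covers, ∀ b c, (∀ f ∈ F, E f b = E f c) → b = c

/-- The composition laws, including those of the identity. -/
def allComps : List (ℕ × ℕ × ℕ) :=
  Q.comps ++ (List.range Q.size).flatMap fun f => [(f, 0, f), (0, f, f)]

/-- The entry `(h, I, J)` requires the signal `z h` to be a function of the messages in `I` and the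
signals in `J`. -/
def dependencies : List (ℕ × List (Fin 4) × List ℕ) :=
  Q.allComps.map (fun c => (c.2.2, [], [c.1, Q.size + c.2.1])) ++
    Q.zeros.map fun h => (h, [0], [])

/-- The emitters of the signals `x f`, `y f`, `z f`, with numbers `f`, `size + f`, `2 * size + f`,
which see the messages `(a, b)`, `(b, c)`, `(a, c)`, and for each dependency the emitter of a signal
masking `z h` by the message `w`. The messages `a`, `b`, `c`, `w` have the numbers
`0`, `1`, `2`, `3`. -/
def emitters : List (Consumer 4) :=
  List.replicate Q.size ([0, 1], [], []) ++ List.replicate Q.size ([1, 2], [], []) ++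
    List.replicate Q.size ([0, 2], [], []) ++
    Q.dependencies.map fun d => ([3], [2 * Q.size + d.1], [])

/-- For each dependency, `w` must be recovered from the masked signal and the allowed inputs, and
`a` from the masked signal and the other messages; the last consumers express that `z 0` determines
`c` and that the signals `x f` with `f` in a cover determine `b`. -/
def sinks : List (Consumer 4) :=
  (List.range Q.dependencies.length).flatMap (fun k =>
    [((Q.dependencies.getD k default).2.1,
      (3 * Q.size + k) :: (Q.dependencies.getD k default).2.2, [3]),
    ([3, 1, 2], [3 * Q.size + k], [0])]) ++
  ([0], [2 * Q.size], [2]) :: ([0] :: Q.covers).map fun F => ([0], F, [1])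

/-- The network that is solvable if the equations have a realization by additive maps of a
nontrivial finite abelian group, and only if they have one by maps of a nontrivial finite set. -/
def network : Network := systemNetwork Q.emitters.length (Q.emitters ++ Q.sinks)

variable {Q}

theorem length_emitters : Q.emitters.length = 3 * Q.size + Q.dependencies.length := by
  simp only [emitters, List.length_append, List.length_replicate, List.length_map]
  ring

theorem emitters_getD_x {f : ℕ} (hf : f < Q.size) :
    Q.emitters.getD f default = ([0, 1], [], []) := by
  grind [emitters]

theorem emitters_getD_y {f : ℕ} (hf : f < Q.size) :
    Q.emitters.getD (Q.size + f) default = ([1, 2], [], []) := by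
  grind [emitters]

theorem emitters_getD_z {f : ℕ} (hf : f < Q.size) :
    Q.emitters.getD (2 * Q.size + f) default = ([0, 2], [], []) := by
  grind [emitters]

theorem emitters_getD_mask {k : ℕ} (hk : k < Q.dependencies.length) :
    Q.emitters.getD (3 * Q.size + k) default =
      ([3], [2 * Q.size + (Q.dependencies.getD k default).1], []) := by
  grind [emitters]

theorem emitter_cases {t : ℕ} (ht : t < Q.emitters.length) :
    (∃ f < Q.size, t = f) ∨ (∃ f < Q.size, t = Q.size + f) ∨ (∃ f < Q.size, t = 2 * Q.size + f) ∨
      ∃ k < Q.dependencies.length, t = 3 * Q.size + k := by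
  rw [length_emitters] at ht
  rcases lt_or_ge t Q.size with h | h
  · exact .inl ⟨t, h, rfl⟩
  rcases lt_or_ge t (2 * Q.size) with h' | h'
  · exact .inr (.inl ⟨t - Q.size, by omega, by omega⟩)
  rcases lt_or_ge t (3 * Q.size) with h'' | h''
  · exact .inr (.inr (.inl ⟨t - 2 * Q.size, by omega, by omega⟩))
  · exact .inr (.inr (.inr ⟨t - 3 * Q.size, by omega, by omega⟩))

theorem demand_eq_nil_of_mem_emitters : ∀ c ∈ Q.emitters, c.2.2 = [] := by
  simp only [emitters, List.mem_append, List.mem_replicate, List.mem_map]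
  rintro c (((⟨-, rfl⟩ | ⟨-, rfl⟩) | ⟨-, rfl⟩) | ⟨d, -, rfl⟩) <;> rfl

theorem mem_sinks {c : Consumer 4} : c ∈ Q.sinks ↔
    (∃ k < Q.dependencies.length, c = ((Q.dependencies.getD k default).2.1,
        (3 * Q.size + k) :: (Q.dependencies.getD k default).2.2, [3]) ∨
      c = ([3, 1, 2], [3 * Q.size + k], [0])) ∨
    c = ([0], [2 * Q.size], [2]) ∨ ∃ F ∈ [0] :: Q.covers, c = ([0], F, [1]) := by
  simp only [sinks, List.mem_append, List.mem_flatMap, List.mem_range, List.mem_cons,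
    List.not_mem_nil, or_false, List.mem_map, eq_comm]

theorem mem_allComps {f g h : ℕ} : (f, g, h) ∈ Q.allComps ↔
    (f, g, h) ∈ Q.comps ∨ ∃ i < Q.size, (f, g, h) = (i, 0, i) ∨ (f, g, h) = (0, i, i) := by
  simp [allComps]

theorem mem_dependencies {d : ℕ × List (Fin 4) × List ℕ} : d ∈ Q.dependencies ↔
    (∃ f g h, (f, g, h) ∈ Q.allComps ∧ d = (h, [], [f, Q.size + g])) ∨
      ∃ h ∈ Q.zeros, d = (h, [0], []) := by
  simp only [dependencies, List.mem_append, List.mem_map, Prod.exists, eq_comm]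

theorem getD_mem_dependencies {k : ℕ} (hk : k < Q.dependencies.length) :
    Q.dependencies.getD k default ∈ Q.dependencies := by
  rw [List.getD_eq_getElem _ _ hk]
  exact List.getElem_mem hk

theorem WellFormed.allComps_lt (hQ : Q.WellFormed) {f g h : ℕ} (hc : (f, g, h) ∈ Q.allComps) :
    f < Q.size ∧ g < Q.size ∧ h < Q.size := by
  have := hQ.pos
  obtain hc | ⟨i, hi, hc | hc⟩ := mem_allComps.1 hc
  · exact hQ.comps_lt _ hc
  · grind
  · grind

theorem WellFormed.dependency_lt (hQ : Q.WellFormed) {d : ℕ × List (Fin 4) × List ℕ}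
    (hd : d ∈ Q.dependencies) :
    d.1 < Q.size ∧ (∀ i ∈ d.2.1, i ≠ 3) ∧ ∀ j ∈ d.2.2, j < 2 * Q.size := by
  obtain ⟨f, g, h, hc, rfl⟩ | ⟨h, hh, rfl⟩ := mem_dependencies.1 hd
  · have := hQ.allComps_lt hc
    grind
  · simp [hQ.zeros_lt h hh]

theorem WellFormed.isCausal (hQ : Q.WellFormed) :
    IsCausal Q.emitters.length (Q.emitters ++ Q.sinks) := by
  have size_pos := hQ.pos
  refine isCausal_append (fun t ht j hj => ?_) fun c hc j hj => ?_
  · obtain ⟨f, hf, rfl⟩ | ⟨f, hf, rfl⟩ | ⟨f, hf, rfl⟩ | ⟨k, hk, rfl⟩ := emitter_cases ht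
    · simp [-List.getD_eq_getElem?_getD, emitters_getD_x hf] at hj
    · simp [-List.getD_eq_getElem?_getD, emitters_getD_y hf] at hj
    · simp [-List.getD_eq_getElem?_getD, emitters_getD_z hf] at hj
    · rw [emitters_getD_mask hk, List.mem_singleton] at hj
      have := (hQ.dependency_lt (getD_mem_dependencies hk)).1
      omega
  · rw [length_emitters]
    obtain ⟨k, hk, rfl | rfl⟩ | rfl | ⟨F, hF, rfl⟩ := mem_sinks.1 hc
    · have := (hQ.dependency_lt (getD_mem_dependencies hk)).2.2 j
      grind
    · grind
    · grind
    · have := hQ.covers_lt F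
      grind

theorem WellFormed.network_valid (hQ : Q.WellFormed) : NetworkValid Q.network :=
  systemNetwork_valid hQ.isCausal

theorem WellFormed.solvable_iff (hQ : Q.WellFormed) : Solvable Q.network ↔
    ∃ q ≥ 2, ∃ X : ℕ → (Fin 4 → Fin q) → Fin q,
      IsSolution Q.emitters.length (Q.emitters ++ Q.sinks) X :=
  exists_congr fun _ => and_congr_right fun hq =>
    solvableWith_systemNetwork_iff (two_pos.trans_le hq) hQ.isCausal

/-! ### Realizations from network codes -/

/-- A variable `z` is a function of `K` if it can be masked by an independent uniform variable `w`
in such a way that `K` suffices to unmask. -/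
theorem eq_of_masked {S T : Type} [Finite T] {z : S → T} {W : T → S → T} {K : S → S → Prop}
    (masked : ∀ w u v, W w u = W w v → z u = z v)
    (unmask : ∀ w w' u v, K u v → W w u = W w' v → w = w')
    (K_refl : ∀ u, K u u) (w : T) {u v : S} (h : K u v) : z u = z v := by
  have surjective : (W · v).Surjective :=
    Finite.surjective_of_injective fun w w' => unmask w w' v v (K_refl v)
  obtain ⟨w', hw'⟩ := surjective (W w u)
  obtain rfl := unmask w w' u v h hw'.symm
  exact masked w u v hw'.symm

section Soundness

variable {T : Type} {X : ℕ → (Fin 4 → T) → T}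
  (hX : IsSolution Q.emitters.length (Q.emitters ++ Q.sinks) X)
  {f h j k : ℕ} {u v : Fin 4 → T}

include hX

theorem emit_eq {t : ℕ} {c : Consumer 4} (ht : t < Q.emitters.length)
    (hc : Q.emitters.getD t default = c) (access_eq : ∀ i ∈ c.1, u i = v i)
    (signal_eq : ∀ j ∈ c.2.1, X j u = X j v) : X t u = X t v := by
  subst hc
  exact ((isSolution_append_iff demand_eq_nil_of_mem_emitters).1 hX).1 t ht u v access_eq signal_eq

theorem x_eq (hf : f < Q.size) (h₀ : u 0 = v 0) (h₁ : u 1 = v 1) : X f u = X f v :=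
  emit_eq hX (by grind [length_emitters]) (emitters_getD_x hf) (by simp [h₀, h₁]) (by simp)

theorem y_eq (hf : f < Q.size) (h₁ : u 1 = v 1) (h₂ : u 2 = v 2) :
    X (Q.size + f) u = X (Q.size + f) v :=
  emit_eq hX (by grind [length_emitters]) (emitters_getD_y hf) (by simp [h₁, h₂]) (by simp)

theorem z_eq (hf : f < Q.size) (h₀ : u 0 = v 0) (h₂ : u 2 = v 2) :
    X (2 * Q.size + f) u = X (2 * Q.size + f) v :=
  emit_eq hX (by grind [length_emitters]) (emitters_getD_z hf) (by simp [h₀, h₂]) (by simp)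

theorem mask_eq (hk : k < Q.dependencies.length) (h₃ : u 3 = v 3)
    (hz : X (2 * Q.size + (Q.dependencies.getD k default).1) u =
      X (2 * Q.size + (Q.dependencies.getD k default).1) v) :
    X (3 * Q.size + k) u = X (3 * Q.size + k) v :=
  emit_eq hX (by grind [length_emitters]) (emitters_getD_mask hk) (by simpa using h₃)
    (by simpa using hz)

theorem signal_update_eq (hj : j < 2 * Q.size) (w : T) : X j (update u 3 w) = X j u := by
  rcases lt_or_ge j Q.size with h | h
  · exact x_eq hX h rfl rfl
  · obtain ⟨f, rfl⟩ := Nat.exists_eq_add_of_le h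
    exact y_eq hX (by omega) rfl rfl

theorem decode_eq {c : Consumer 4} (hc : c ∈ Q.sinks) (access_eq : ∀ i ∈ c.1, u i = v i)
    (signal_eq : ∀ j ∈ c.2.1, X j u = X j v) : ∀ i ∈ c.2.2, u i = v i :=
  hX.decode c (List.mem_append_right _ hc) u v access_eq signal_eq

theorem eq_of_mask_eq (hk : k < Q.dependencies.length) (h₁ : u 1 = v 1) (h₂ : u 2 = v 2)
    (h₃ : u 3 = v 3) (hm : X (3 * Q.size + k) u = X (3 * Q.size + k) v) : u 0 = v 0 :=
  decode_eq hX (mem_sinks.2 (.inl ⟨k, hk, .inr rfl⟩)) (by simp [h₁, h₂, h₃]) (by simpa using hm) 0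
    (by simp)

theorem unmask_eq (hk : k < Q.dependencies.length)
    (access_eq : ∀ i ∈ (Q.dependencies.getD k default).2.1, u i = v i)
    (signal_eq : ∀ j ∈ (Q.dependencies.getD k default).2.2, X j u = X j v)
    (hm : X (3 * Q.size + k) u = X (3 * Q.size + k) v) : u 3 = v 3 :=
  decode_eq hX (mem_sinks.2 (.inl ⟨k, hk, .inl rfl⟩)) access_eq
    (List.forall_mem_cons.2 ⟨hm, signal_eq⟩) 3 (by simp)

theorem eq_of_z_zero_eq (h₀ : u 0 = v 0) (hz : X (2 * Q.size) u = X (2 * Q.size) v) : u 2 = v 2 :=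
  decode_eq hX (mem_sinks.2 (.inr (.inl rfl))) (by simpa using h₀) (by simpa using hz) 2 (by simp)

theorem eq_of_cover {F : List ℕ} (hF : F ∈ [0] :: Q.covers) (h₀ : u 0 = v 0)
    (hx : ∀ f ∈ F, X f u = X f v) : u 1 = v 1 :=
  decode_eq hX (mem_sinks.2 (.inr (.inr ⟨F, hF, rfl⟩))) (by simpa using h₀) hx 1 (by simp)

theorem eq_of_z_eq (hQ : Q.WellFormed) (hk : k < Q.dependencies.length) (h₂ : u 2 = v 2)
    (hz : X (2 * Q.size + (Q.dependencies.getD k default).1) u =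
      X (2 * Q.size + (Q.dependencies.getD k default).1) v) : u 0 = v 0 := by
  have hd := (hQ.dependency_lt (getD_mem_dependencies hk)).1
  have hz' : X (2 * Q.size + (Q.dependencies.getD k default).1) u =
      X (2 * Q.size + (Q.dependencies.getD k default).1) (update u 0 (v 0)) :=
    hz.trans (z_eq hX hd (by simp) (by simp [h₂]))
  simpa using eq_of_mask_eq hX hk (by simp) (by simp) (by simp) (mask_eq hX hk (by simp) hz')

theorem z_eq_of_mask_eq [Finite T] (hQ : Q.WellFormed) (hk : k < Q.dependencies.length) (w : T)
    (hm : X (3 * Q.size + k) (update u 3 w) = X (3 * Q.size + k) (update v 3 w)) :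
    X (2 * Q.size + (Q.dependencies.getD k default).1) u =
      X (2 * Q.size + (Q.dependencies.getD k default).1) v := by
  set z := X (2 * Q.size + (Q.dependencies.getD k default).1)
  have hd := (hQ.dependency_lt (getD_mem_dependencies hk)).1
  have surjective : (fun a => z (update u 0 a)).Surjective :=
    Finite.surjective_of_injective fun a a' h => by
      simpa using eq_of_z_eq hX hQ hk (by simp) h
  obtain ⟨a, ha⟩ := surjective (z v)
  have z_update (u : Fin 4 → T) : z (update u 3 w) = z u := z_eq hX hd rfl rfl
  have hm' : X (3 * Q.size + k) (update (update u 0 a) 3 w) =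
      X (3 * Q.size + k) (update u 3 w) :=
    (mask_eq hX hk (by simp) ((z_update _).trans (ha.trans (z_update v).symm))).trans hm.symm
  obtain rfl : a = u 0 := by
    simpa using eq_of_mask_eq hX hk (by simp) (by simp) (by simp) hm'
  exact (congrArg z (update_eq_self 0 u)).symm.trans ha

theorem z_eq_of_dependency [Finite T] (hQ : Q.WellFormed) {d : ℕ × List (Fin 4) × List ℕ}
    (hd : d ∈ Q.dependencies) (access_eq : ∀ i ∈ d.2.1, u i = v i)
    (signal_eq : ∀ j ∈ d.2.2, X j u = X j v) :
    X (2 * Q.size + d.1) u = X (2 * Q.size + d.1) v := by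
  obtain ⟨k, hk, rfl⟩ := List.getElem_of_mem hd
  rw [← List.getD_eq_getElem _ default hk] at *
  set d := Q.dependencies.getD k default
  obtain ⟨-, access_ne, signal_lt⟩ := hQ.dependency_lt hd
  refine eq_of_masked (W := fun w u => X (3 * Q.size + k) (update u 3 w))
    (K := fun u v => (∀ i ∈ d.2.1, u i = v i) ∧ ∀ j ∈ d.2.2, X j u = X j v)
    (fun w u v => z_eq_of_mask_eq hX hQ hk w) (fun w w' u v hK hm => ?_)
    (fun u => ⟨fun _ _ => rfl, fun _ _ => rfl⟩) (u 3) ⟨access_eq, signal_eq⟩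
  have access_eq' : ∀ i ∈ d.2.1, update u 3 w i = update v 3 w' i := fun i hi => by
    simpa [access_ne i hi] using hK.1 i hi
  have signal_eq' : ∀ j ∈ d.2.2, X j (update u 3 w) = X j (update v 3 w') := fun j hj => by
    simpa only [signal_update_eq hX (signal_lt j hj)] using hK.2 j hj
  simpa using unmask_eq hX hk access_eq' signal_eq' hm

theorem isOperatorGadget_of_isSolution [Finite T] (hQ : Q.WellFormed) (o : T) :
    IsOperatorGadget (ι := Fin Q.size) ⟨0, hQ.pos⟩ (fun f g h => (f.1, g.1, h.1) ∈ Q.allComps)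
      (fun f a b => X f ![a, b, o, o]) (fun f b c => X (Q.size + f) ![o, b, c, o])
      fun f a c => X (2 * Q.size + f) ![a, o, c, o] where
  mul_one f := mem_allComps.2 (.inr ⟨f, f.2, .inl rfl⟩)
  one_mul f := mem_allComps.2 (.inr ⟨f, f.2, .inr rfl⟩)
  comp {f g h a b c a' b' c'} hC hx hy := by
    have x_restrict (a b c : T) : X f ![a, b, c, o] = X f ![a, b, o, o] := x_eq hX f.2 rfl rfl
    have y_restrict (a b c : T) : X (Q.size + g) ![a, b, c, o] = X (Q.size + g) ![o, b, c, o] :=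
      y_eq hX g.2 rfl rfl
    have z_restrict (a b c : T) :
        X (2 * Q.size + h) ![a, b, c, o] = X (2 * Q.size + h) ![a, o, c, o] :=
      z_eq hX h.2 rfl rfl
    have hz := z_eq_of_dependency hX hQ (u := ![a, b, c, o]) (v := ![a', b', c', o])
      (mem_dependencies.2 (.inl ⟨f, g, h, hC, rfl⟩)) (by simp) <| by
        simp only [List.mem_cons, List.not_mem_nil, or_false, forall_eq_or_imp, forall_eq]
        exact ⟨by rw [x_restrict, hx, x_restrict a' b' c'], by rw [y_restrict, hy, y_restrict a']⟩
    rwa [z_restrict a, z_restrict a'] at hz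
  z_injective f c a a' h := by
    obtain ⟨k, hk, hd⟩ := List.getElem_of_mem
      (mem_dependencies.2 (.inl ⟨f, 0, f, mem_allComps.2 (.inr ⟨f, f.2, .inl rfl⟩), rfl⟩))
    rw [← List.getD_eq_getElem _ default hk] at hd
    exact eq_of_z_eq hX hQ hk (u := ![a, o, c, o]) (v := ![a', o, c, o]) rfl (by rw [hd]; exact h)
  z_one_injective a c c' h :=
    eq_of_z_zero_eq hX (u := ![a, o, c, o]) (v := ![a, o, c', o]) rfl h
  x_one_injective a b b' h :=
    eq_of_cover hX (u := ![a, b, o, o]) (v := ![a, b', o, o]) List.mem_cons_self rfl (by simpa)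

theorem exists_isRealization_of_isSolution [Finite T] (hQ : Q.WellFormed) (o : T) :
    ∃ E, Q.IsRealization o E := by
  have G := isOperatorGadget_of_isSolution hX hQ o
  set E : ℕ → T → T := fun f => if hf : f < Q.size then G.operator o ⟨f, hf⟩ else id with hE
  have E_eq {f : ℕ} (hf : f < Q.size) (c : T) : E f c = G.operator o ⟨f, hf⟩ c := by
    simp only [hE, dif_pos hf]
  refine ⟨E, fun f hf => (E_eq hf o).trans (G.operator_base _), fun c =>
    (E_eq hQ.pos c).trans (G.operator_one c), fun f g h hc c => ?_, fun h hh c => ?_,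
    fun F hF c c' hE => ?_⟩
  · obtain ⟨hf, hg, hh⟩ := hQ.comps_lt _ hc
    rw [E_eq hh, E_eq hg, E_eq hf]
    exact G.operator_comp (mem_allComps.2 (.inl hc)) c
  · rw [E_eq (hQ.zeros_lt h hh)]
    refine G.operator_eq_base (fun a c c' => ?_) c
    exact z_eq_of_dependency hX hQ (u := ![a, o, c, o]) (v := ![a, o, c', o])
      (mem_dependencies.2 (.inr ⟨h, hh, rfl⟩)) (by simp) (by simp)
  · refine G.eq_of_forall_operator_eq (F := {f | f.1 ∈ F}) (o := o) (fun a b b' hx => ?_)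
      fun f hf => ?_
    · exact eq_of_cover hX (u := ![a, b, o, o]) (v := ![a, b', o, o]) (.tail _ hF) rfl
        fun f hf => hx ⟨f, hQ.covers_lt F hF f hf⟩ hf
    · rw [← E_eq f.2, ← E_eq f.2]
      exact hE f hf

end Soundness

theorem WellFormed.exists_isRealization (hQ : Q.WellFormed) (hs : Solvable Q.network) :
    ∃ (A : Type) (_ : Finite A) (_ : Nontrivial A) (o : A) (E : ℕ → A → A),
      Q.IsRealization o E := by
  obtain ⟨q, hq, X, hX⟩ := hQ.solvable_iff.1 hs
  obtain ⟨E, hE⟩ := exists_isRealization_of_isSolution hX hQ (⟨0, by omega⟩ : Fin q)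
  exact ⟨Fin q, inferInstance, Fin.nontrivial_iff_two_le.2 hq, _, E, hE⟩

/-! ### Network codes from additive realizations -/

section Completeness

variable {V : Type} [AddCommGroup V]

/-- The signals `x f = a - E f b`, `y f = b - E f c`, `z f = a - E f c`, and `w + z h` for each
dependency of `z h`. -/
def additiveCode (Q : OperatorEquations) (E : ℕ → V →+ V) (t : ℕ) (m : Fin 4 → V) : V :=
  if t < Q.size then m 0 - E t (m 1)
  else if t < 2 * Q.size then m 1 - E (t - Q.size) (m 2)
  else if t < 3 * Q.size then m 0 - E (t - 2 * Q.size) (m 2)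
  else m 3 + (m 0 - E (Q.dependencies.getD (t - 3 * Q.size) default).1 (m 2))

variable {E : ℕ → V →+ V} {f k : ℕ} (m : Fin 4 → V)

theorem additiveCode_x (hf : f < Q.size) : additiveCode Q E f m = m 0 - E f (m 1) :=
  if_pos hf

theorem additiveCode_y (hf : f < Q.size) :
    additiveCode Q E (Q.size + f) m = m 1 - E f (m 2) := by
  grind [additiveCode]

theorem additiveCode_z (hf : f < Q.size) :
    additiveCode Q E (2 * Q.size + f) m = m 0 - E f (m 2) := by
  grind [additiveCode]

theorem additiveCode_mask : additiveCode Q E (3 * Q.size + k) m =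
    m 3 + (m 0 - E (Q.dependencies.getD k default).1 (m 2)) := by
  grind [additiveCode]

variable {m m' : Fin 4 → V}

theorem additiveCode_emit (hQ : Q.WellFormed) {t : ℕ} (ht : t < Q.emitters.length)
    (access_eq : ∀ i ∈ (Q.emitters.getD t default).1, m i = m' i)
    (signal_eq : ∀ j ∈ (Q.emitters.getD t default).2.1,
      additiveCode Q E j m = additiveCode Q E j m') :
    additiveCode Q E t m = additiveCode Q E t m' := by
  obtain ⟨f, hf, rfl⟩ | ⟨f, hf, rfl⟩ | ⟨f, hf, rfl⟩ | ⟨k, hk, rfl⟩ := emitter_cases ht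
  · rw [emitters_getD_x hf] at access_eq
    rw [additiveCode_x _ hf, additiveCode_x _ hf, access_eq 0 (by simp), access_eq 1 (by simp)]
  · rw [emitters_getD_y hf] at access_eq
    rw [additiveCode_y _ hf, additiveCode_y _ hf, access_eq 1 (by simp), access_eq 2 (by simp)]
  · rw [emitters_getD_z hf] at access_eq
    rw [additiveCode_z _ hf, additiveCode_z _ hf, access_eq 0 (by simp), access_eq 2 (by simp)]
  · have hd := (hQ.dependency_lt (getD_mem_dependencies hk)).1
    rw [emitters_getD_mask hk] at access_eq signal_eq
    have hz := signal_eq _ List.mem_cons_self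
    rw [additiveCode_z _ hd, additiveCode_z _ hd] at hz
    rw [additiveCode_mask, additiveCode_mask, hz, access_eq 3 (by simp)]

variable (hE : Q.IsRealization 0 fun f => E f)

include hE

theorem IsRealization.sub_eq_of_dependency (hQ : Q.WellFormed)
    {d : ℕ × List (Fin 4) × List ℕ} (hd : d ∈ Q.dependencies)
    (access_eq : ∀ i ∈ d.2.1, m i = m' i)
    (signal_eq : ∀ j ∈ d.2.2, additiveCode Q E j m = additiveCode Q E j m') :
    m 0 - E d.1 (m 2) = m' 0 - E d.1 (m' 2) := by
  obtain ⟨f, g, h, hc, rfl⟩ | ⟨h, hh, rfl⟩ := mem_dependencies.1 hd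
  · obtain ⟨hf, hg, -⟩ := hQ.allComps_lt hc
    have comp (c : V) : E h c = E f (E g c) := by
      obtain hc | ⟨i, -, hc | hc⟩ := mem_allComps.1 hc
      · exact hE.comp f g h hc c
      · obtain ⟨rfl, rfl, rfl⟩ : f = i ∧ g = 0 ∧ h = i := by simpa using hc
        exact congrArg (E h) (hE.one c).symm
      · obtain ⟨rfl, rfl, rfl⟩ : f = 0 ∧ g = i ∧ h = i := by simpa using hc
        exact (hE.one _).symm
    have expand (m : Fin 4 → V) :
        m 0 - E h (m 2) = (m 0 - E f (m 1)) + E f (m 1 - E g (m 2)) := by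
      rw [comp, map_sub]
      abel
    have hx := signal_eq f (by simp)
    have hy := signal_eq (Q.size + g) (by simp)
    rw [additiveCode_x _ hf, additiveCode_x _ hf] at hx
    rw [additiveCode_y _ hg, additiveCode_y _ hg] at hy
    rw [expand, expand, hx, hy]
  · have zero (c : V) : E h c = 0 := hE.zero h hh c
    rw [zero, zero, access_eq 0 (by simp)]

theorem IsRealization.additiveCode_decode (hQ : Q.WellFormed) {c : Consumer 4} (hc : c ∈ Q.sinks)
    (access_eq : ∀ i ∈ c.1, m i = m' i)
    (signal_eq : ∀ j ∈ c.2.1, additiveCode Q E j m = additiveCode Q E j m') :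
    ∀ i ∈ c.2.2, m i = m' i := by
  obtain ⟨k, hk, rfl | rfl⟩ | rfl | ⟨F, hF, rfl⟩ := mem_sinks.1 hc <;>
    simp only [List.mem_singleton, forall_eq]
  · obtain ⟨mask_eq, signal_eq⟩ := List.forall_mem_cons.1 signal_eq
    rw [additiveCode_mask, additiveCode_mask,
      hE.sub_eq_of_dependency hQ (getD_mem_dependencies hk) access_eq signal_eq] at mask_eq
    exact add_right_cancel mask_eq
  · have mask_eq := signal_eq _ List.mem_cons_self
    rw [additiveCode_mask, additiveCode_mask, access_eq 3 (by simp), access_eq 2 (by simp)]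
      at mask_eq
    exact sub_left_injective (add_left_cancel mask_eq)
  · have z_eq := signal_eq (2 * Q.size + 0) (by simp)
    rw [additiveCode_z _ hQ.pos, additiveCode_z _ hQ.pos, access_eq 0 (by simp), sub_right_inj]
      at z_eq
    rwa [← hE.one (m 2), ← hE.one (m' 2)]
  · have F_lt : ∀ f ∈ F, f < Q.size := by
      obtain rfl | hF := List.mem_cons.1 hF
      · simpa using hQ.pos
      · exact hQ.covers_lt F hF
    have E_eq : ∀ f ∈ F, E f (m 1) = E f (m' 1) := fun f hf => by
      have x_eq := signal_eq f hf
      rwa [additiveCode_x _ (F_lt f hf), additiveCode_x _ (F_lt f hf), access_eq 0 (by simp),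
        sub_right_inj] at x_eq
    obtain rfl | hF := List.mem_cons.1 hF
    · rw [← hE.one (m 1), ← hE.one (m' 1)]
      exact E_eq 0 (by simp)
    · exact hE.cover F hF _ _ E_eq

theorem IsRealization.isSolution (hQ : Q.WellFormed) :
    IsSolution Q.emitters.length (Q.emitters ++ Q.sinks) (additiveCode Q E) :=
  (isSolution_append_iff demand_eq_nil_of_mem_emitters).2
    ⟨fun _ ht _ _ => additiveCode_emit hQ ht, fun _ hc _ _ => hE.additiveCode_decode hQ hc⟩

theorem IsRealization.solvable [Finite V] [Nontrivial V] (hQ : Q.WellFormed) :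
    Solvable Q.network := by
  obtain ⟨X, hX⟩ := exists_isSolution_of_equiv (Finite.equivFin V) (hE.isSolution hQ)
  exact hQ.solvable_iff.2 ⟨Nat.card V, Finite.one_lt_card, X, hX⟩

end Completeness

end OperatorEquations

section Computability

open Primrec

theorem primrec_systemEdges {α : Type} [Primcodable α] {s : ℕ} {E : α → ℕ}
    {L : α → List (Consumer s)} (hE : Primrec E) (hL : Primrec L) :
    Primrec fun a => systemEdges (E a) (L a) := by
  have consumer : Primrec fun p : α × ℕ => (L p.1).getD p.2 default :=
    (list_getD _).comp (hL.comp fst) snd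
  refine list_append.comp (list_map (list_range.comp hE) ?_)
    (list_flatMap (list_range.comp (list_length.comp hL)) ?_)
  · have source : Primrec fun p : α × ℕ => 2 * p.2 := nat_mul.comp (const 2) snd
    exact source.pair (succ.comp source)
  · exact list_map (fst.comp (snd.comp consumer))
      ((succ.comp (nat_mul.comp (const 2) snd)).pair (nat_mul.comp (const 2) (snd.comp fst)))

theorem primrec_flatMap_pair {α : Type} [Primcodable α] {s : ℕ} {L : α → List (Consumer s)}
    (hL : Primrec L) {f : Consumer s → List (Fin s)} (hf : Primrec f) :
    Primrec fun a => (L a).flatMap fun c => [(f c).map Fin.val, []] :=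
  list_flatMap hL (list_cons.comp (list_map (hf.comp snd) (fin_val.comp snd)) (const [[]]))

theorem primrec_systemNetwork {α : Type} [Primcodable α] {s : ℕ} {E : α → ℕ}
    {L : α → List (Consumer s)} (hE : Primrec E) (hL : Primrec L) :
    Primrec fun a => systemNetwork (E a) (L a) :=
  (nat_mul.comp (const 2) (list_length.comp hL)).pair <| (const s).pair <|
    (primrec_systemEdges hE hL).pair <|
      (primrec_flatMap_pair hL fst).pair (primrec_flatMap_pair hL (snd.comp snd))

theorem primrec_replicate {α β : Type} [Primcodable α] [Primcodable β] {n : α → ℕ} (hn : Primrec n)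
    (b : β) : Primrec fun a => List.replicate (n a) b :=
  (list_map (list_range.comp hn) (Primrec₂.const b)).of_eq fun a => by simp

end Computability

namespace OperatorEquations

open Primrec

variable {α : Type} [Primcodable α] {Q : α → OperatorEquations}
  (hsize : Primrec fun a => (Q a).size) (hcomps : Primrec fun a => (Q a).comps)
  (hzeros : Primrec fun a => (Q a).zeros)

include hsize hcomps hzeros

theorem primrec_dependencies : Primrec fun a => (Q a).dependencies := by
  have hall : Primrec fun a => (Q a).allComps :=
    list_append.comp hcomps <| list_flatMap (list_range.comp hsize) <|
      list_cons.comp (snd.pair ((const 0).pair snd)) <|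
        list_cons.comp ((const 0).pair (snd.pair snd)) (const [])
  refine list_append.comp (list_map hall ?_)
    (list_map hzeros (snd.pair ((const [0]).pair (const []))))
  exact (snd.comp (snd.comp snd)).pair <| (const []).pair <|
    list_cons.comp (fst.comp snd) <|
      list_cons.comp (nat_add.comp (hsize.comp fst) (fst.comp (snd.comp snd))) (const [])

theorem primrec_emitters : Primrec fun a => (Q a).emitters := by
  have hmask : Primrec₂ fun a (d : ℕ × List (Fin 4) × List ℕ) =>
      (([3], [2 * (Q a).size + d.1], []) : Consumer 4) :=
    (const [3]).pair <| .pair (list_cons.comp (nat_add.comp (nat_mul.comp (const 2)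
      (hsize.comp fst)) (fst.comp snd)) (const [])) (const [])
  exact list_append.comp (list_append.comp (list_append.comp (primrec_replicate hsize _)
    (primrec_replicate hsize _)) (primrec_replicate hsize _))
    (list_map (primrec_dependencies hsize hcomps hzeros) hmask)

variable (hcovers : Primrec fun a => (Q a).covers)

include hcovers

theorem primrec_sinks : Primrec fun a => (Q a).sinks := by
  have hdeps := primrec_dependencies hsize hcomps hzeros
  have dep : Primrec fun p : α × ℕ => (Q p.1).dependencies.getD p.2 default :=
    (list_getD _).comp (hdeps.comp fst) snd
  have mask : Primrec fun p : α × ℕ => 3 * (Q p.1).size + p.2 :=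
    nat_add.comp (nat_mul.comp (const 3) (hsize.comp fst)) snd
  have unmask := (fst.comp (snd.comp dep)).pair <|
    (list_cons.comp mask (snd.comp (snd.comp dep))).pair (const [(3 : Fin 4)])
  have decodeMasked := (const [(3 : Fin 4), 1, 2]).pair <|
    (list_cons.comp mask (const [])).pair (const [(0 : Fin 4)])
  have decodeThird := (const [(0 : Fin 4)]).pair <|
    (list_cons.comp (nat_mul.comp (const 2) hsize) (const [])).pair (const [(2 : Fin 4)])
  exact list_append.comp
    (list_flatMap (list_range.comp (list_length.comp hdeps))
      (list_cons.comp unmask (list_cons.comp decodeMasked (const []))))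
    (list_cons.comp decodeThird (list_map (list_cons.comp (const [0]) hcovers)
      ((const [0]).pair (snd.pair (const [1])))))

theorem primrec_network : Primrec fun a => (Q a).network :=
  have hemitters := primrec_emitters hsize hcomps hzeros
  primrec_systemNetwork (list_length.comp hemitters)
    (list_append.comp hemitters (primrec_sinks hsize hcomps hzeros hcovers))

end OperatorEquations

/-! ### Presentations by words -/

/-- Conditions on a family of operators indexed by the letters in `L`, in which a word stands for
the composite of its letters: the two sides of each of the `relations` are equal, the words in
`nulls` are constant, and the words in each of the `covers` are jointly injective. Moreover, for a
parameter `n`, the letter `target` equals the word `head * base ^ n * tail`. -/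
structure Presentation (L : Type) where
  relations : List (List L × List L)
  nulls : List (List L)
  covers : List (List (List L))
  target : L
  head : L
  base : L
  tail : List L

namespace Presentation

variable {L : Type} (P : Presentation L)

/-- The operators `ρ` satisfy the conditions for the parameter `n` and fix the base point `o`. -/
structure IsModel (n : ℕ) {A : Type} (o : A) (ρ : L → A → A) : Prop where
  basepoint : ∀ x, ρ x o = o
  relation : ∀ r ∈ P.relations, ∀ c, r.1.foldr ρ c = r.2.foldr ρ c
  null : ∀ u ∈ P.nulls, ∀ c, u.foldr ρ c = o
  cover : ∀ F ∈ P.covers, ∀ c c', (∀ u ∈ F, u.foldr ρ c = u.foldr ρ c') → c = c'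
  power : ∀ c, ρ P.target c = (P.head :: (List.replicate n P.base ++ P.tail)).foldr ρ c

/-- The words occurring in the presentation, apart from `head * base ^ n * tail`. -/
def roots : List (List L) :=
  P.relations.map Prod.fst ++ P.relations.map Prod.snd ++ P.nulls ++ P.covers.flatten ++
    [[P.target], [P.head], [P.base], P.tail]

/-- The suffixes and the letters of the roots. The empty word comes first, so that it gets the index
`0` of the identity. -/
def words : List (List L) := [] :: P.roots.flatMap fun u => u.tails ++ u.map fun x => [x]

/-- The index of the operator of a word. -/
def index (u : List L) : ℕ := P.words.idxOf u

/-- The laws that express the operator of a word by the operators of its letters. -/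
def letterComps : List L → List (ℕ × ℕ × ℕ)
  | [] => []
  | x :: u => [(P.index [x], P.index u, P.index (x :: u))]

/-- The presentation as a system of composition laws. After the operators of the words come those
of `head * base ^ k` for `k ≤ n`. -/
def equations (n : ℕ) : OperatorEquations where
  size := P.words.length + n + 1
  comps := P.words.flatMap P.letterComps ++ P.relations.map (fun r => (0, P.index r.1, P.index r.2))
    ++ (0, P.index [P.head], P.words.length) ::
      (P.words.length + n, P.index P.tail, P.index [P.target]) ::
      (List.range n).map fun k => (P.words.length + k, P.index [P.base], P.words.length + k + 1)
  zeros := P.nulls.map P.index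
  covers := P.covers.map (List.map P.index)

variable {P}

theorem nil_mem_words : [] ∈ P.words := List.mem_cons_self

theorem mem_words_of_mem_roots {u : List L} (hu : u ∈ P.roots) : u ∈ P.words :=
  List.mem_cons_of_mem _ <| List.mem_flatMap.2
    ⟨u, hu, List.mem_append_left _ ((List.mem_tails _ _).2 List.suffix_rfl)⟩

theorem mem_words_of_cons_mem_words {x : L} {u : List L} (h : x :: u ∈ P.words) :
    [x] ∈ P.words ∧ u ∈ P.words := by
  simp only [words, List.mem_cons, List.mem_flatMap, List.mem_append, List.mem_tails,
    List.mem_map] at h ⊢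
  rcases h with h | ⟨v, hv, h | ⟨y, hy, h⟩⟩
  · cases h
  · exact ⟨.inr ⟨v, hv, .inr ⟨x, h.subset List.mem_cons_self, rfl⟩⟩,
      .inr ⟨v, hv, .inl ((List.suffix_cons x u).trans h)⟩⟩
  · obtain ⟨rfl, rfl⟩ := List.cons.inj h
    exact ⟨.inr ⟨v, hv, .inr ⟨y, hy, rfl⟩⟩, .inl rfl⟩

theorem relation_mem_words {r : List L × List L} (hr : r ∈ P.relations) :
    r.1 ∈ P.words ∧ r.2 ∈ P.words := by
  constructor <;> refine mem_words_of_mem_roots ?_ <;> grind [roots]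

theorem null_mem_words {u : List L} (hu : u ∈ P.nulls) : u ∈ P.words :=
  mem_words_of_mem_roots (by grind [roots])

theorem cover_mem_words {F : List (List L)} (hF : F ∈ P.covers) {u : List L} (hu : u ∈ F) :
    u ∈ P.words :=
  mem_words_of_mem_roots (by grind [roots, List.mem_flatten])

theorem target_mem_words : [P.target] ∈ P.words := mem_words_of_mem_roots (by simp [roots])

theorem head_mem_words : [P.head] ∈ P.words := mem_words_of_mem_roots (by simp [roots])

theorem base_mem_words : [P.base] ∈ P.words := mem_words_of_mem_roots (by simp [roots])

theorem tail_mem_words : P.tail ∈ P.words := mem_words_of_mem_roots (by simp [roots])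

theorem index_nil : P.index [] = 0 := List.idxOf_cons_self

theorem index_lt {u : List L} (hu : u ∈ P.words) : P.index u < P.words.length :=
  List.idxOf_lt_length_of_mem hu

theorem forall_mem_comps {n : ℕ} {p : ℕ × ℕ × ℕ → Prop} :
    (∀ c ∈ (P.equations n).comps, p c) ↔
      (∀ x u, x :: u ∈ P.words → p (P.index [x], P.index u, P.index (x :: u))) ∧
      (∀ r ∈ P.relations, p (0, P.index r.1, P.index r.2)) ∧
      p (0, P.index [P.head], P.words.length) ∧
      p (P.words.length + n, P.index P.tail, P.index [P.target]) ∧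
      ∀ k < n, p (P.words.length + k, P.index [P.base], P.words.length + k + 1) := by
  have letters : (∀ c ∈ P.words.flatMap P.letterComps, p c) ↔
      ∀ x u, x :: u ∈ P.words → p (P.index [x], P.index u, P.index (x :: u)) := by
    refine List.forall_mem_flatMap.trans ⟨fun h x u hu => h _ hu _ (by simp [letterComps]), ?_⟩
    rintro h (_ | ⟨x, u⟩) hu c hc
    · cases hc
    · exact List.mem_singleton.1 hc ▸ h x u hu
  simp only [equations, List.forall_mem_append, letters, List.forall_mem_cons,
    List.forall_mem_map, List.mem_range, and_assoc]

theorem equations_wellFormed (n : ℕ) : (P.equations n).WellFormed := by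
  have lt {u} (hu : u ∈ P.words) : P.index u < (P.equations n).size :=
    (index_lt hu).trans_le (by simp only [equations]; omega)
  have length_add_lt {k} (hk : k ≤ n) : P.words.length + k < (P.equations n).size := by
    simp only [equations]; omega
  have pos : 0 < (P.equations n).size := Nat.succ_pos _
  refine ⟨pos, forall_mem_comps.2 ⟨fun x u hu => ?_, fun r hr => ?_, ?_, ?_, fun k hk => ?_⟩,
    List.forall_mem_map.2 fun u hu => lt (null_mem_words hu),
    List.forall_mem_map.2 fun F hF => List.forall_mem_map.2 fun u hu => lt (cover_mem_words hF hu)⟩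
  · exact ⟨lt (mem_words_of_cons_mem_words hu).1, lt (mem_words_of_cons_mem_words hu).2, lt hu⟩
  · exact ⟨pos, lt (relation_mem_words hr).1, lt (relation_mem_words hr).2⟩
  · exact ⟨pos, lt head_mem_words, length_add_lt n.zero_le⟩
  · exact ⟨length_add_lt le_rfl, lt tail_mem_words, lt target_mem_words⟩
  · exact ⟨length_add_lt hk.le, lt base_mem_words, length_add_lt hk⟩

theorem primrec_network (P : Presentation L) : Primrec fun n => (P.equations n).network := by
  open Primrec in
  refine OperatorEquations.primrec_network (nat_add.comp (nat_add.comp (const _) .id) (const 1))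
    ?_ (const _) (const _)
  have stageIndex : Primrec fun k => P.words.length + k := nat_add.comp (const _) .id
  exact list_append.comp (const _) <| list_cons.comp (const _) <|
    list_cons.comp (stageIndex.pair (const _)) <| list_map list_range <|
      (stageIndex.comp snd).pair ((const _).pair (succ.comp (stageIndex.comp snd)))

section Soundness

variable {A : Type} {o : A} {E : ℕ → A → A} {n : ℕ}

/-- The operators of the letters in a realization of the equations; letters that do not occur act
as the identity. -/
def letterOperator (P : Presentation L) (E : ℕ → A → A) (x : L) : A → A :=
  if [x] ∈ P.words then E (P.index [x]) else id

variable (hE : (P.equations n).IsRealization o E)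

include hE

theorem foldr_letterOperator {u : List L} (hu : u ∈ P.words) (c : A) :
    u.foldr (P.letterOperator E) c = E (P.index u) c := by
  induction u with
  | nil => rw [index_nil, hE.one, List.foldr_nil]
  | cons x u ih =>
    obtain ⟨hx, hu'⟩ := mem_words_of_cons_mem_words hu
    have law := (forall_mem_comps.1 fun c => hE.comp c.1 c.2.1 c.2.2).1 x u hu
    rw [law, List.foldr_cons, ih hu', letterOperator, if_pos hx]

theorem foldr_head_replicate_base {k : ℕ} (hk : k ≤ n) (c : A) :
    (P.head :: List.replicate k P.base).foldr (P.letterOperator E) c =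
      E (P.words.length + k) c := by
  obtain ⟨-, -, head, -, base⟩ := forall_mem_comps.1 fun c => hE.comp c.1 c.2.1 c.2.2
  induction k generalizing c with
  | zero => rw [List.replicate_zero, foldr_letterOperator hE head_mem_words, add_zero, head, hE.one]
  | succ k ih =>
    rw [List.replicate_succ', ← List.cons_append, List.foldr_append,
      foldr_letterOperator hE base_mem_words, ih (by omega), ← base k hk, add_assoc]

theorem isModel_letterOperator : P.IsModel n o (P.letterOperator E) where
  basepoint x := by
    rw [letterOperator]
    split_ifs with hx
    · exact hE.base _ ((index_lt hx).trans_le (by simp only [equations]; omega))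
    · rfl
  relation r hr c := by
    obtain ⟨hr₁, hr₂⟩ := relation_mem_words hr
    have law := (forall_mem_comps.1 fun c => hE.comp c.1 c.2.1 c.2.2).2.1 r hr
    rw [foldr_letterOperator hE hr₁, foldr_letterOperator hE hr₂, law, hE.one]
  null u hu c := by
    rw [foldr_letterOperator hE (null_mem_words hu)]
    exact hE.zero _ (List.mem_map_of_mem hu) c
  cover F hF c c' h := by
    refine hE.cover _ (List.mem_map_of_mem hF) c c' (List.forall_mem_map.2 fun u hu => ?_)
    have hu' := cover_mem_words hF hu
    rw [← foldr_letterOperator hE hu', ← foldr_letterOperator hE hu', h u hu]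
  power c := by
    have law := (forall_mem_comps.1 fun c => hE.comp c.1 c.2.1 c.2.2).2.2.2.1
    calc P.letterOperator E P.target c = E (P.index [P.target]) c :=
          foldr_letterOperator hE target_mem_words c
      _ = E (P.words.length + n) (E (P.index P.tail) c) := law c
      _ = _ := by
        rw [← foldr_head_replicate_base hE le_rfl, ← foldr_letterOperator hE tail_mem_words,
          ← List.foldr_append, List.cons_append]

end Soundness

theorem exists_isModel_of_solvable {n : ℕ} (h : Solvable (P.equations n).network) :
    ∃ (A : Type) (_ : Finite A) (_ : Nontrivial A) (o : A) (ρ : L → A → A), P.IsModel n o ρ :=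
  let ⟨A, finA, ntA, o, _, hE⟩ := (equations_wellFormed n).exists_isRealization h
  ⟨A, finA, ntA, o, _, isModel_letterOperator hE⟩

/-- The word with a given index, inverse to `index` on `words`. -/
def wordAt (P : Presentation L) (i : ℕ) : List L :=
  if i < P.words.length then P.words.getD i []
  else P.head :: List.replicate (i - P.words.length) P.base

theorem wordAt_index {u : List L} (hu : u ∈ P.words) : P.wordAt (P.index u) = u := by
  rw [wordAt, if_pos (index_lt hu), List.getD_eq_getElem _ _ (index_lt hu)]
  exact List.getElem_idxOf _

theorem wordAt_zero : P.wordAt 0 = [] := by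
  rw [← index_nil (P := P), wordAt_index nil_mem_words]

theorem wordAt_length_add (k : ℕ) :
    P.wordAt (P.words.length + k) = P.head :: List.replicate k P.base := by
  simp [wordAt]

section Completeness

variable {V : Type} [AddCommGroup V] {ρ : L → AddMonoid.End V} {n : ℕ}

theorem prod_map_apply (u : List L) (v : V) : (u.map ρ).prod v = u.foldr (fun x => ρ x) v := by
  induction u with
  | nil => rfl
  | cons x u ih => rw [List.map_cons, List.prod_cons, AddMonoid.End.coe_mul, Function.comp_apply,
      ih, List.foldr_cons]

theorem IsModel.isRealization (hρ : P.IsModel n 0 fun x => ρ x) :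
    (P.equations n).IsRealization 0 fun i => (P.wordAt i).foldr fun x => ρ x where
  base f _ := by rw [← prod_map_apply, map_zero]
  one c := by rw [wordAt_zero, List.foldr_nil]
  comp f g h := by
    revert f g h
    suffices ∀ c ∈ (P.equations n).comps, ∀ v, (P.wordAt c.2.2).foldr (fun x => ρ x) v =
        (P.wordAt c.1 ++ P.wordAt c.2.1).foldr (fun x => ρ x) v by
      simpa only [List.foldr_append] using fun f g h hc => this (f, g, h) hc
    refine forall_mem_comps.2 ⟨fun x u hu => ?_, fun r hr => ?_, ?_, ?_, fun k _ => ?_⟩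
    · obtain ⟨hx, hu'⟩ := mem_words_of_cons_mem_words hu
      simp only [wordAt_index, hu, hx, hu', List.singleton_append, implies_true]
    · simpa only [wordAt_index, relation_mem_words hr, wordAt_zero, List.nil_append]
        using fun v => (hρ.relation r hr v).symm
    · have wordAt_length : P.wordAt P.words.length = [P.head] := wordAt_length_add 0
      simp only [wordAt_zero, wordAt_index head_mem_words, wordAt_length, List.nil_append,
        implies_true]
    · simp only [wordAt_index target_mem_words, wordAt_index tail_mem_words, wordAt_length_add]
      exact hρ.power
    · simp only [add_assoc, wordAt_length_add, wordAt_index base_mem_words, List.replicate_succ',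
        List.cons_append, implies_true]
  zero := List.forall_mem_map.2 fun u hu => by
    simpa only [wordAt_index (null_mem_words hu)] using hρ.null u hu
  cover := List.forall_mem_map.2 fun F hF c c' h => hρ.cover F hF c c' fun u hu => by
    simpa only [wordAt_index (cover_mem_words hF hu)] using h _ (List.mem_map_of_mem hu)

theorem IsModel.solvable [Finite V] [Nontrivial V] (hρ : P.IsModel n 0 fun x => ρ x) :
    Solvable (P.equations n).network := by
  have hE := hρ.isRealization
  simp only [← prod_map_apply] at hE
  exact hE.solvable (equations_wellFormed n)

end Completeness

end Presentation

/-! ### The presentation of a program -/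

/-- The letters that describe a register machine. An operator is thought of as acting from the right
on configurations, so that a word is executed from left to right: `tick` advances the clock, `start`
requires all registers to be zero, `head` passes from loading the registers to execution, `accept`
requires the output register `1` to be zero after the execution, `inc i` increments register `i`,
`isZero i` requires register `i` to be zero, and `run p` executes `p`. -/
inductive MachineLetter : Type
  | tick | start | head | accept
  | inc (i : ℕ)
  | isZero (i : ℕ)
  | run (p : Program)

/-- The letters of the presentation of a program. Besides those of the machine they are
`computation`, the word of the whole computation, and operators on a cycle of even length: its
rotation `shift`, the bijection `halve`, the projections `even` and `odd` to the positions of a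
given parity, the projection `trim` that forgets the last two positions, and `last` and `penult`,
which read these positions. -/
inductive Letter : Type
  | machine (x : MachineLetter)
  | computation | shift | halve | even | odd | trim | last | penult

/-- The defining relations of `p` and its subprograms, one for each constructor of `Run`. -/
def programRelations : Program → List (List MachineLetter × List MachineLetter)
  | .skip => [([.head, .run .skip], [.tick, .head])]
  | .inc i => [([.head, .run (.inc i)], [.tick, .inc i, .head])]
  | .seq p q => ([.head, .run (.seq p q)], [.tick, .head, .run p, .run q]) ::
      (programRelations p ++ programRelations q)
  | .loop i p =>
      ([.inc i, .head, .run (.loop i p)], [.tick, .head, .run p, .run (.loop i p)]) ::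
      ([.isZero i, .head, .run (.loop i p)], [.tick, .isZero i, .head]) :: programRelations p

/-- The relations that make `start * tick ^ k * ∏ i < m, inc i ^ σ i` a faithful record of the clock
`k` and the register contents `σ`. -/
def registerRelations (m : ℕ) : List (List MachineLetter × List MachineLetter) :=
  (List.range m).flatMap fun i =>
    ([.start, .isZero i], [.start]) :: ([.tick, .inc i], [.inc i, .tick]) ::
    ([.tick, .isZero i], [.isZero i, .tick]) ::
    ((List.range m).filter (· ≠ i)).flatMap fun j =>
      [([.inc i, .inc j], [.inc j, .inc i]), ([.isZero i, .inc j], [.inc j, .isZero i])]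

/-- The relations of the machine that runs `p` on the registers below `m`. -/
def machineRelations (p : Program) (m : ℕ) : List (List MachineLetter × List MachineLetter) :=
  programRelations p ++ registerRelations m

/-- The presentation of the program `p`, where `n` is the input. If the computation is null, then
`trim` is injective, which yields `halve * shift = shift ^ 2 * halve`. On a finite set this forces
the rotation `shift` to have odd order, which is incompatible with its interchanging `even` and
`odd`. -/
def machinePresentation (p : Program) (m : ℕ) : Presentation Letter where
  relations := (machineRelations p m).map (Prod.map (List.map .machine) (List.map .machine)) ++
    [([.even, .shift], [.shift, .odd]), ([.odd, .shift], [.shift, .even]),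
      ([.trim, .halve, .shift], [.trim, .shift, .shift, .halve])]
  nulls := [[.machine (.inc 1), .machine .head, .machine .accept], [.even, .odd]]
  covers := [[[.shift]], [[.halve]], [[.even], [.odd]],
    [[.trim], [.computation, .last], [.computation, .penult]]]
  target := .computation
  head := .machine .start
  base := .machine (.inc 0)
  tail := [.machine .head, .machine (.run p), .machine .accept]

/-! ### Simulation of a program by words -/

section Simulation

variable {G : Type} [Monoid G] (μ : MachineLetter → G) (m : ℕ)

/-- The elements `μ` satisfy the given relations. -/
def Satisfies (R : List (List MachineLetter × List MachineLetter)) : Prop :=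
  ∀ r ∈ R, (r.1.map μ).prod = (r.2.map μ).prod

/-- The product that records the contents `σ` of the registers below `m`. -/
def registers (σ : ℕ → ℕ) : G := ((List.range m).map fun i => μ (.inc i) ^ σ i).prod

/-- The product that records the clock `k` and the contents `σ` of the registers below `m`. -/
def configuration (k : ℕ) (σ : ℕ → ℕ) : G := μ .start * μ .tick ^ k * registers μ m σ

variable {μ m}

theorem Satisfies.append {R S : List (List MachineLetter × List MachineLetter)} :
    Satisfies μ (R ++ S) ↔ Satisfies μ R ∧ Satisfies μ S := List.forall_mem_append

theorem Satisfies.cons {r : List MachineLetter × List MachineLetter}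
    {R : List (List MachineLetter × List MachineLetter)} :
    Satisfies μ (r :: R) ↔ (r.1.map μ).prod = (r.2.map μ).prod ∧ Satisfies μ R :=
  List.forall_mem_cons

section Registers

variable (h : Satisfies μ (registerRelations m)) {i j : ℕ} (hi : i < m) (hj : j < m)
include h hi

theorem Satisfies.start_mul_isZero : μ .start * μ (.isZero i) = μ .start := by
  simpa using h ([.start, .isZero i], [.start]) (by simp [registerRelations, hi])

theorem Satisfies.commute_tick_inc : Commute (μ .tick) (μ (.inc i)) := by
  simpa [Commute, SemiconjBy] using
    h ([.tick, .inc i], [.inc i, .tick]) (by simp [registerRelations, hi])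

theorem Satisfies.commute_tick_isZero : Commute (μ .tick) (μ (.isZero i)) := by
  simpa [Commute, SemiconjBy] using
    h ([.tick, .isZero i], [.isZero i, .tick]) (by simp [registerRelations, hi])

include hj

theorem Satisfies.commute_inc_inc : Commute (μ (.inc i)) (μ (.inc j)) := by
  rcases eq_or_ne j i with rfl | hji
  · exact Commute.refl _
  · simpa [Commute, SemiconjBy] using
      h ([.inc i, .inc j], [.inc j, .inc i]) (by simp [registerRelations, hi, hj, hji])

theorem Satisfies.commute_isZero_inc (hji : j ≠ i) : Commute (μ (.isZero i)) (μ (.inc j)) := by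
  simpa [Commute, SemiconjBy] using
    h ([.isZero i, .inc j], [.inc j, .isZero i]) (by simp [registerRelations, hi, hj, hji])

end Registers

theorem commute_registers {g : G} {σ : ℕ → ℕ}
    (h : ∀ i < m, σ i ≠ 0 → Commute g (μ (.inc i))) : Commute g (registers μ m σ) := by
  refine Commute.list_prod_right _ _ fun x hx => ?_
  obtain ⟨i, hi, rfl⟩ := List.mem_map.1 hx
  by_cases hσ : σ i = 0
  · simp only [hσ, pow_zero, Commute.one_right]
  · exact (h i (List.mem_range.1 hi) hσ).pow_right _

theorem registers_update_of_le {i : ℕ} (hi : m ≤ i) (σ : ℕ → ℕ) (x : ℕ) :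
    registers μ m (update σ i x) = registers μ m σ := by
  refine congrArg List.prod (List.map_congr_left fun j hj => ?_)
  rw [update_of_ne ((List.mem_range.1 hj).trans_le hi).ne]

theorem registers_mul_inc (h : ∀ i < m, ∀ j < m, Commute (μ (.inc i)) (μ (.inc j))) {i : ℕ}
    (hi : i < m) (σ : ℕ → ℕ) :
    registers μ m σ * μ (.inc i) = registers μ m (update σ i (σ i + 1)) := by
  have registers_succ (m σ) : registers μ (m + 1) σ = registers μ m σ * μ (.inc m) ^ σ m := by
    simp [registers, List.range_succ]
  induction m with
  | zero => omega
  | succ m ih =>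
    rw [registers_succ, registers_succ]
    rcases (Nat.le_of_lt_succ hi).eq_or_lt with rfl | him
    · rw [registers_update_of_le le_rfl, update_self, pow_succ, mul_assoc]
    · rw [update_of_ne him.ne', ← ih (fun i hi j hj => h i (by omega) j (by omega)) him,
        mul_assoc, mul_assoc, ((h i hi m m.lt_succ_self).pow_right _).eq]

section Configuration

variable (h : Satisfies μ (registerRelations m))
include h

theorem configuration_mul_tick (k : ℕ) (σ : ℕ → ℕ) :
    configuration μ m k σ * μ .tick = configuration μ m (k + 1) σ := by
  have hcomm : Commute (μ .tick) (registers μ m σ) :=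
    commute_registers fun i hi _ => h.commute_tick_inc hi
  rw [configuration, configuration, mul_assoc, ← hcomm.eq, pow_succ]
  simp only [mul_assoc]

theorem configuration_mul_inc {i : ℕ} (hi : i < m) (k : ℕ) (σ : ℕ → ℕ) :
    configuration μ m k σ * μ (.inc i) = configuration μ m k (update σ i (σ i + 1)) := by
  rw [configuration, mul_assoc,
    registers_mul_inc (fun i hi j hj => h.commute_inc_inc hi hj) hi, configuration]

theorem configuration_eq_mul_inc {i x : ℕ} (hi : i < m) {σ : ℕ → ℕ} (hσ : σ i = x + 1) (k : ℕ) :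
    configuration μ m k σ = configuration μ m k (update σ i x) * μ (.inc i) := by
  rw [configuration_mul_inc h hi, update_self, update_idem, ← hσ, update_eq_self]

theorem configuration_mul_isZero {i : ℕ} (hi : i < m) {σ : ℕ → ℕ} (hσ : σ i = 0) (k : ℕ) :
    configuration μ m k σ * μ (.isZero i) = configuration μ m k σ := by
  have hregisters : Commute (μ (.isZero i)) (registers μ m σ) :=
    commute_registers fun j hj hσj => h.commute_isZero_inc hi hj (by rintro rfl; exact hσj hσ)
  have htick : Commute (μ (.isZero i)) (μ .tick ^ k) := (h.commute_tick_isZero hi).symm.pow_right k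
  calc configuration μ m k σ * μ (.isZero i)
      = μ .start * (μ .tick ^ k * μ (.isZero i)) * registers μ m σ := by
        simp only [configuration, mul_assoc, hregisters.eq]
    _ = μ .start * μ (.isZero i) * μ .tick ^ k * registers μ m σ := by
        simp only [← htick.eq, mul_assoc]
    _ = configuration μ m k σ := by rw [h.start_mul_isZero hi, configuration]

theorem configuration_inputState (hm : 0 < m) (n : ℕ) :
    configuration μ m 0 (inputState n) = μ .start * μ (.inc 0) ^ n := by
  induction n with
  | zero => simp [configuration, registers, inputState]
  | succ n ih =>
    rw [pow_succ, ← mul_assoc, ← ih, configuration_mul_inc h hm, inputState, inputState,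
      update_self, update_idem]

theorem configuration_mul_head_mul_run {p : Program} {σ τ : ℕ → ℕ} {t : ℕ} (hrun : p.Run σ t τ)
    (hp : Satisfies μ (programRelations p)) (hm : p.RegistersBelow m) (k : ℕ) :
    configuration μ m k σ * μ .head * μ (.run p) = configuration μ m (k + t) τ * μ .head := by
  induction hrun generalizing k with
  | skip σ =>
    have hskip : μ .head * μ (.run .skip) = μ .tick * μ .head := by
      simpa using hp _ List.mem_cons_self
    rw [mul_assoc, hskip, ← mul_assoc, configuration_mul_tick h]
  | inc i σ =>
    have hinc : μ .head * μ (.run (.inc i)) = μ .tick * μ (.inc i) * μ .head := by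
      simpa [mul_assoc] using hp _ List.mem_cons_self
    rw [mul_assoc, hinc, ← mul_assoc, ← mul_assoc, configuration_mul_tick h,
      configuration_mul_inc h hm]
  | @seq p q σ t τ t' υ _ _ ihp ihq =>
    obtain ⟨hseq, hpq⟩ := Satisfies.cons.1 hp
    replace hseq : μ .head * μ (.run (.seq p q)) = μ .tick * μ .head * μ (.run p) * μ (.run q) := by
      simpa [mul_assoc] using hseq
    obtain ⟨hp, hq⟩ := Satisfies.append.1 hpq
    rw [mul_assoc, hseq, ← mul_assoc, ← mul_assoc, ← mul_assoc, configuration_mul_tick h,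
      ihp hp hm.1, ihq hq hm.2, ← add_assoc, ← add_assoc]
  | @loop_zero i p σ hσ =>
    have hloop : μ (.isZero i) * μ .head * μ (.run (.loop i p)) =
        μ .tick * μ (.isZero i) * μ .head := by
      simpa [mul_assoc] using hp _ (List.mem_cons_of_mem _ List.mem_cons_self)
    rw [← configuration_mul_isZero h hm.1 hσ, mul_assoc, mul_assoc, ← mul_assoc (μ _), hloop,
      ← mul_assoc, ← mul_assoc, configuration_mul_tick h, configuration_mul_isZero h hm.1 hσ]
  | @loop_succ i p σ x t τ t' υ hσ _ _ ihbody ihloop =>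
    obtain ⟨hloop, hrest⟩ := Satisfies.cons.1 hp
    replace hloop : μ (.inc i) * μ .head * μ (.run (.loop i p)) =
        μ .tick * μ .head * μ (.run p) * μ (.run (.loop i p)) := by
      simpa [mul_assoc] using hloop
    rw [configuration_eq_mul_inc h hm.1 hσ, mul_assoc, mul_assoc, ← mul_assoc (μ _), hloop,
      ← mul_assoc, ← mul_assoc, ← mul_assoc, configuration_mul_tick h,
      ihbody (Satisfies.cons.1 hrest).2 hm.2, ihloop hp hm, ← add_assoc, ← add_assoc]

theorem exists_mul_inc_mul_head_of_run {p : Program} {n t i : ℕ} {τ : ℕ → ℕ}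
    (hrun : p.Run (inputState n) t τ) (hp : Satisfies μ (programRelations p))
    (hm : p.RegistersBelow m) (hi : i < m) (hτ : τ i ≠ 0) :
    ∃ σ, μ .start * μ (.inc 0) ^ n * μ .head * μ (.run p) =
      configuration μ m t σ * μ (.inc i) * μ .head := by
  obtain ⟨x, hx⟩ := Nat.exists_eq_succ_of_ne_zero hτ
  exact ⟨update τ i x, by
    rw [← configuration_inputState h (by omega), configuration_mul_head_mul_run h hrun hp hm,
      zero_add, configuration_eq_mul_inc h hi hx]⟩

end Configuration

end Simulation

/-! ### A nonzero output excludes finite models -/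

theorem isOfFinOrder_of_isLeftRegular {G : Type*} [Monoid G] [Finite G] {j : G}
    (hj : IsLeftRegular j) : IsOfFinOrder j := by
  obtain ⟨k, hk⟩ := Finite.surjective_of_injective hj 1
  exact isOfFinOrder_iff_isUnit.2 (IsUnit.of_mul_eq_one k hk)

theorem odd_orderOf_of_semiconjBy_sq {G : Type*} [Monoid G] {t j : G} (hj : IsOfFinOrder j)
    (ht : IsLeftRegular t) (h : SemiconjBy t j (j ^ 2)) : Odd (orderOf j) := by
  by_contra heven
  obtain ⟨k, hk⟩ := even_iff_two_dvd.1 (Nat.not_odd_iff_even.1 heven)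
  have hjk : t * j ^ k = t * 1 := by
    rw [(h.pow_right k).eq, ← pow_mul, ← hk, pow_orderOf_eq_one, one_mul, mul_one]
  have hpos := hj.orderOf_pos
  have hle := orderOf_le_of_pow_eq_one (by omega) (ht hjk)
  omega

theorem eq_of_semiconjBy_of_odd_orderOf {G : Type*} [Monoid G] {j e f : G}
    (hj : Odd (orderOf j)) (hfe : SemiconjBy j f e) (hef : SemiconjBy j e f) : e = f := by
  obtain ⟨k, hk⟩ := hj
  have hodd : SemiconjBy (j ^ (2 * k + 1)) f e := by
    rw [pow_succ, pow_mul, sq]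
    exact SemiconjBy.mul_left (Commute.pow_left (SemiconjBy.mul_left hfe hef) k) hfe
  rw [← hk, pow_orderOf_eq_one] at hodd
  simpa only [SemiconjBy, one_mul, mul_one, eq_comm] using hodd

/-- A family of self-maps as elements of the monoid of self-maps. -/
def endo {L A : Type} (ρ : L → A → A) (x : L) : Function.End A := ρ x

theorem foldr_eq_prod_map_endo {L A : Type} (ρ : L → A → A) (u : List L) (c : A) :
    u.foldr ρ c = (u.map (endo ρ)).prod c := by
  induction u with
  | nil => rfl
  | cons x u ih => rw [List.foldr_cons, ih]; rfl

theorem isLeftRegular_endo {L A : Type} {ρ : L → A → A} {x : L} (hx : Injective (ρ x)) :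
    IsLeftRegular (endo ρ x) := hx.comp_left

namespace Presentation.IsModel

section Pointed

variable {L A : Type} {P : Presentation L} {n : ℕ} {o : A} {ρ : L → A → A} (h : P.IsModel n o ρ)
include h

theorem prod_map_endo_eq {u v : List L} (hr : (u, v) ∈ P.relations) :
    (u.map (endo ρ)).prod = (v.map (endo ρ)).prod := by
  funext c
  simpa only [foldr_eq_prod_map_endo] using h.relation _ hr c

theorem endo_mem_stabilizer (x : L) :
    endo ρ x ∈ MulAction.stabilizerSubmonoid (Function.End A) o := h.basepoint x

end Pointed

variable {p : Program} {m n : ℕ} {A : Type} {o : A} {ρ : Letter → A → A}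
  (h : (machinePresentation p m).IsModel n o ρ)
include h

theorem satisfies_machineRelations :
    Satisfies (fun x => endo ρ (.machine x)) (machineRelations p m) := by
  intro r hr
  have hrel := h.prod_map_endo_eq (List.mem_append_left _ (List.mem_map_of_mem hr))
  rwa [List.map_map, List.map_map] at hrel

theorem configuration_apply_basepoint (k : ℕ) (σ : ℕ → ℕ) :
    configuration (fun x => endo ρ (.machine x)) m k σ o = o := by
  have hmem (x : MachineLetter) := h.endo_mem_stabilizer (.machine x)
  refine mul_mem (mul_mem (hmem _) (pow_mem (hmem _) k)) (Submonoid.list_prod_mem _ ?_)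
  simpa only [List.forall_mem_map] using fun i _ => pow_mem (hmem _) (σ i)

theorem computation_eq_basepoint (hp : p.RegistersBelow m) (hm : 1 < m) {t : ℕ} {τ : ℕ → ℕ}
    (hrun : p.Run (inputState n) t τ) (hτ : τ 1 ≠ 0) (c : A) : ρ .computation c = o := by
  have hsat := Satisfies.append.1 h.satisfies_machineRelations
  obtain ⟨σ, hσ⟩ := exists_mul_inc_mul_head_of_run hsat.2 hrun hsat.1 hp hm hτ
  have hnull : ρ (.machine (.inc 1)) (ρ (.machine .head) (ρ (.machine .accept) c)) = o :=
    h.null _ List.mem_cons_self c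
  calc ρ .computation c
      = (endo ρ (.machine .start) * endo ρ (.machine (.inc 0)) ^ n * endo ρ (.machine .head) *
          endo ρ (.machine (.run p)) * endo ρ (.machine .accept)) c := by
        refine (h.power c).trans ((foldr_eq_prod_map_endo ρ _ c).trans ?_)
        simp [machinePresentation, mul_assoc]
    _ = configuration (fun x => endo ρ (.machine x)) m t σ
          (ρ (.machine (.inc 1)) (ρ (.machine .head) (ρ (.machine .accept) c))) := by rw [hσ]; rfl
    _ = o := by rw [hnull, h.configuration_apply_basepoint]

variable (hcomputation : ∀ c, ρ .computation c = o)
include hcomputation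

theorem semiconjBy_halve_shift_sq :
    SemiconjBy (endo ρ .halve) (endo ρ .shift) (endo ρ .shift ^ 2) := by
  have htrim : Injective (ρ .trim) := fun c c' hc =>
    h.cover [[.trim], [.computation, .last], [.computation, .penult]]
      (by simp [machinePresentation]) c c' (by simp [hc, hcomputation])
  have hrel := h.prod_map_endo_eq
    (show ([.trim, .halve, .shift], [.trim, .shift, .shift, .halve]) ∈ _ by
      simp [machinePresentation])
  refine isLeftRegular_endo htrim (?_ : endo ρ .trim * _ = endo ρ .trim * _)
  simpa [sq, mul_assoc] using hrel

theorem even_eq_odd [Finite A] : ρ .even = ρ .odd := by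
  have hshift : Injective (ρ .shift) := fun c c' hc =>
    h.cover [[.shift]] (by simp [machinePresentation]) c c' (by simpa using hc)
  have hhalve : Injective (ρ .halve) := fun c c' hc =>
    h.cover [[.halve]] (by simp [machinePresentation]) c c' (by simpa using hc)
  have hodd : SemiconjBy (endo ρ .shift) (endo ρ .odd) (endo ρ .even) := by
    simpa [SemiconjBy] using (h.prod_map_endo_eq (u := [.even, .shift]) (v := [.shift, .odd])
      (by simp [machinePresentation])).symm
  have heven : SemiconjBy (endo ρ .shift) (endo ρ .even) (endo ρ .odd) := by
    simpa [SemiconjBy] using (h.prod_map_endo_eq (u := [.odd, .shift]) (v := [.shift, .even])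
      (by simp [machinePresentation])).symm
  have : Finite (Function.End A) := inferInstanceAs (Finite (A → A))
  have horder : Odd (orderOf (endo ρ .shift)) := odd_orderOf_of_semiconjBy_sq
    (isOfFinOrder_of_isLeftRegular (isLeftRegular_endo hshift)) (isLeftRegular_endo hhalve)
    (h.semiconjBy_halve_shift_sq hcomputation)
  have heq : endo ρ .even = endo ρ .odd := eq_of_semiconjBy_of_odd_orderOf horder hodd heven
  exact heq

theorem subsingleton [Finite A] : Subsingleton A := by
  have heq := h.even_eq_odd hcomputation
  have hinj : Injective (ρ .even) := fun c c' hc =>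
    h.cover [[.even], [.odd]] (by simp [machinePresentation]) c c' (by simp [← heq, hc])
  have hnull (c : A) : ρ .even (ρ .even c) = o := by
    simpa [← heq] using h.null [.even, .odd] (by simp [machinePresentation]) c
  exact ⟨fun c c' => hinj (hinj ((hnull c).trans (hnull c').symm))⟩

end Presentation.IsModel

theorem not_solvable_of_run {p : Program} {m n t : ℕ} {τ : ℕ → ℕ} (hp : p.RegistersBelow m)
    (hm : 1 < m) (hrun : p.Run (inputState n) t τ) (hτ : τ 1 ≠ 0) :
    ¬ Solvable ((machinePresentation p m).equations n).network := fun hsolvable => by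
  obtain ⟨A, _, _, o, ρ, h⟩ := Presentation.exists_isModel_of_solvable hsolvable
  exact not_subsingleton A (h.subsingleton (h.computation_eq_basepoint hp hm hrun hτ))

open Relator Relation

/-! ### Linear models from partial functions -/

section Trace

variable {L B : Type} (step : L → B → B → Prop)

/-- The relation obtained by performing the steps of a word from left to right. -/
def Trace : List L → B → B → Prop
  | [] => Eq
  | x :: u => Comp (step x) (Trace u)

variable {step}

theorem trace_append {u v : List L} {b c b' : B} (hu : Trace step u b c) (hv : Trace step v c b') :
    Trace step (u ++ v) b b' := by
  induction u generalizing b with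
  | nil => exact hu ▸ hv
  | cons x u ih =>
    obtain ⟨a, hx, hu⟩ := hu
    exact ⟨a, hx, ih hu⟩

theorem rightUnique_trace (hstep : ∀ x, RightUnique (step x)) :
    ∀ u : List L, RightUnique (Trace step u)
  | [] => fun _ _ _ h h' => h.symm.trans h'
  | x :: u => fun _ _ _ ⟨_, hx, hu⟩ ⟨_, hx', hu'⟩ =>
    rightUnique_trace hstep u hu (hstep x hx hx' ▸ hu')

/-- The operator on functions induced by a partial function `R`: it composes a function with `R`
where `R` is defined and extends it by zero. -/
def pullback (R : B → B → Prop) : AddMonoid.End (B → ZMod 2) where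
  toFun φ b := if h : ∃ b', R b b' then φ h.choose else 0
  map_zero' := by funext b; simp
  map_add' φ ψ := by funext b; by_cases h : ∃ b', R b b' <;> simp [h]

variable {R S : B → B → Prop}

theorem pullback_apply (hR : RightUnique R) {b b' : B} (h : R b b') (φ : B → ZMod 2) :
    pullback R φ b = φ b' := by
  have hex : ∃ b', R b b' := ⟨b', h⟩
  exact (dif_pos hex).trans (congrArg φ (hR hex.choose_spec h))

theorem pullback_apply_eq_zero {b : B} (h : ∀ b', ¬ R b b') (φ : B → ZMod 2) :
    pullback R φ b = 0 := dif_neg (not_exists.2 h)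

theorem pullback_pullback (hR : RightUnique R) (hS : RightUnique S) (φ : B → ZMod 2) :
    pullback R (pullback S φ) = pullback (Comp R S) φ := by
  have hRS : RightUnique (Comp R S) := fun _ _ _ ⟨_, h, h'⟩ ⟨_, k, k'⟩ => hS h' (hR h k ▸ k')
  funext b
  by_cases hb : ∃ c, R b c
  · obtain ⟨c, hbc⟩ := hb
    rw [pullback_apply hR hbc]
    by_cases hc : ∃ b', S c b'
    · obtain ⟨b', hcb⟩ := hc
      rw [pullback_apply hS hcb, pullback_apply hRS ⟨c, hbc, hcb⟩]
    · rw [pullback_apply_eq_zero (not_exists.1 hc),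
        pullback_apply_eq_zero fun b' ⟨c', hbc', hcb⟩ => hc ⟨b', hR hbc hbc' ▸ hcb⟩]
  · rw [pullback_apply_eq_zero (not_exists.1 hb),
      pullback_apply_eq_zero fun b' ⟨c, hbc, _⟩ => hb ⟨c, hbc⟩]

theorem foldr_pullback (hstep : ∀ x, RightUnique (step x)) (u : List L) (φ : B → ZMod 2) :
    u.foldr (fun x => pullback (step x)) φ = pullback (Trace step u) φ := by
  induction u with
  | nil => funext b; exact (pullback_apply (fun _ _ _ h h' => h.symm.trans h') rfl φ).symm
  | cons x u ih =>
    rw [List.foldr_cons, ih, pullback_pullback (hstep x) (rightUnique_trace hstep u), Trace]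

theorem Presentation.isModel_pullback {P : Presentation L} {n : ℕ}
    (hstep : ∀ x, RightUnique (step x))
    (hrelation : ∀ r ∈ P.relations, Trace step r.1 = Trace step r.2)
    (hnull : ∀ u ∈ P.nulls, ∀ b b', ¬ Trace step u b b')
    (hcover : ∀ F ∈ P.covers, ∀ b', ∃ u ∈ F, ∃ b, Trace step u b b')
    (hpower : step P.target = Trace step (P.head :: (List.replicate n P.base ++ P.tail))) :
    P.IsModel n 0 fun x => pullback (step x) where
  basepoint _ := map_zero _
  relation r hr φ := by simp only [foldr_pullback hstep, hrelation r hr]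
  null u hu φ := by
    rw [foldr_pullback hstep]
    exact funext fun b => pullback_apply_eq_zero (hnull u hu b) φ
  cover F hF φ ψ h := by
    funext b'
    obtain ⟨u, hu, b, hb⟩ := hcover F hF b'
    have hb_eq := congrFun (h u hu) b
    simpa only [foldr_pullback hstep, pullback_apply (rightUnique_trace hstep u) hb] using hb_eq
  power φ := by rw [foldr_pullback hstep, hpower]

end Trace

/-! ### The operators on a cycle -/

/-- The word `start * inc 0 ^ n * head * run p * accept`. -/
def computationWord (p : Program) (n : ℕ) : List MachineLetter :=
  .start :: (List.replicate n (.inc 0) ++ [.head, .run p, .accept])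

section Cycle

variable {d : ℕ} (step : MachineLetter → Fin (2 * d) → Fin (2 * d) → Prop)
  (word : List MachineLetter) (final : Fin (2 * d))

/-- The partial functions on a cycle of length `2 * d` that interpret the letters, given those of
the machine and the final state of the computation. The step of `halve` is the multiplication by
`1 / 2` modulo `2 * d - 1`, with `0` and `2 * d - 1` kept apart. -/
def letterStep : Letter → Fin (2 * d) → Fin (2 * d) → Prop
  | .machine x => step x
  | .computation => Trace step word
  | .shift => fun s s' => s'.val = s + 1 ∨ s'.val = 0 ∧ s.val + 1 = 2 * d
  | .halve => fun s s' => 2 * s'.val = s ∨ 2 * s'.val + 1 = s + 2 * d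
  | .even => fun s s' => s.val % 2 = 0 ∧ s' = s
  | .odd => fun s s' => s.val % 2 = 1 ∧ s' = s
  | .trim => fun s s' => s.val + 2 < 2 * d ∧ s' = s
  | .last => fun s s' => s = final ∧ s'.val + 1 = 2 * d
  | .penult => fun s s' => s = final ∧ s'.val + 2 = 2 * d

variable {step word final}

theorem rightUnique_letterStep (hstep : ∀ x, RightUnique (step x)) (x : Letter) :
    RightUnique (letterStep step word final x) := by
  intro s s' s'' h h'
  cases x
  case machine x => exact hstep x h h'
  case computation => exact rightUnique_trace hstep _ h h'
  all_goals
    simp only [letterStep] at h h'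
    omega

theorem trace_letterStep_map_machine (u : List MachineLetter) :
    Trace (letterStep step word final) (u.map .machine) = Trace step u := by
  induction u with
  | nil => rfl
  | cons x u ih => rw [List.map_cons, Trace, ih, Trace, letterStep]

theorem trace_even_shift : Trace (letterStep step word final) [.even, .shift] =
    Trace (letterStep step word final) [.shift, .odd] := by
  funext s s'
  apply propext
  constructor
  · rintro ⟨_, ⟨hs, rfl⟩, _, hshift, rfl⟩
    exact ⟨_, hshift, _, ⟨by simp only [letterStep] at hshift; omega, rfl⟩, rfl⟩
  · rintro ⟨_, hshift, _, ⟨hs, rfl⟩, rfl⟩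
    exact ⟨_, ⟨by simp only [letterStep] at hshift; omega, rfl⟩, _, hshift, rfl⟩

theorem trace_odd_shift : Trace (letterStep step word final) [.odd, .shift] =
    Trace (letterStep step word final) [.shift, .even] := by
  funext s s'
  apply propext
  constructor
  · rintro ⟨_, ⟨hs, rfl⟩, _, hshift, rfl⟩
    exact ⟨_, hshift, _, ⟨by simp only [letterStep] at hshift; omega, rfl⟩, rfl⟩
  · rintro ⟨_, hshift, _, ⟨hs, rfl⟩, rfl⟩
    exact ⟨_, ⟨by simp only [letterStep] at hshift; omega, rfl⟩, _, hshift, rfl⟩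

theorem trace_trim_halve_shift : Trace (letterStep step word final) [.trim, .halve, .shift] =
    Trace (letterStep step word final) [.trim, .shift, .shift, .halve] := by
  funext s s'
  apply propext
  constructor
  · rintro ⟨s, ⟨hs, rfl⟩, a, hhalve, b, hshift, rfl⟩
    simp only [letterStep] at hhalve hshift
    exact ⟨_, ⟨hs, rfl⟩, ⟨s + 1, by omega⟩, .inl rfl, ⟨s + 2, hs⟩, .inl rfl, b,
      by simp only [letterStep]; omega, rfl⟩
  · rintro ⟨_, ⟨hs, rfl⟩, a, hshift, b, hshift', c, hhalve, rfl⟩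
    simp only [letterStep] at hhalve hshift hshift'
    exact ⟨_, ⟨hs, rfl⟩, ⟨c - 1, by omega⟩, by simp only [letterStep]; omega, c,
      by simp only [letterStep]; omega, rfl⟩

theorem exists_trace_shift (s' : Fin (2 * d)) :
    ∃ s, Trace (letterStep step word final) [.shift] s s' := by
  rcases Nat.eq_zero_or_pos s'.val with h | h
  · exact ⟨⟨2 * d - 1, by omega⟩, s', .inr ⟨h, by simp only; omega⟩, rfl⟩
  · exact ⟨⟨s' - 1, by omega⟩, s', .inl (by simp only; omega), rfl⟩

theorem exists_trace_halve (s' : Fin (2 * d)) :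
    ∃ s, Trace (letterStep step word final) [.halve] s s' := by
  rcases lt_or_ge s'.val d with h | h
  · exact ⟨⟨2 * s', by omega⟩, s', .inl rfl, rfl⟩
  · exact ⟨⟨2 * s' + 1 - 2 * d, by omega⟩, s', .inr (by simp only; omega), rfl⟩

theorem exists_trace_even_or_odd (s' : Fin (2 * d)) :
    ∃ u ∈ [[.even], [.odd]], ∃ s, Trace (letterStep step word final) u s s' := by
  rcases Nat.mod_two_eq_zero_or_one s' with h | h
  · exact ⟨[.even], by simp, s', s', ⟨h, rfl⟩, rfl⟩
  · exact ⟨[.odd], by simp, s', s', ⟨h, rfl⟩, rfl⟩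

theorem exists_trace_trim_or_last_or_penult {initial : Fin (2 * d)}
    (hword : Trace step word initial final) (s' : Fin (2 * d)) :
    ∃ u ∈ [[.trim], [.computation, .last], [.computation, .penult]],
      ∃ s, Trace (letterStep step word final) u s s' := by
  obtain h | h | h : s'.val + 2 < 2 * d ∨ s'.val + 1 = 2 * d ∨ s'.val + 2 = 2 * d := by omega
  · exact ⟨[.trim], by simp, s', s', ⟨h, rfl⟩, rfl⟩
  · exact ⟨[.computation, .last], by simp, initial, final, hword, s', ⟨rfl, h⟩, rfl⟩
  · exact ⟨[.computation, .penult], by simp, initial, final, hword, s', ⟨rfl, h⟩, rfl⟩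

theorem machinePresentation_isModel {p : Program} {m n : ℕ} {initial : Fin (2 * d)}
    (hstep : ∀ x, RightUnique (step x))
    (hrelation : ∀ r ∈ machineRelations p m, Trace step r.1 = Trace step r.2)
    (hnull : ∀ s s', ¬ Trace step [.inc 1, .head, .accept] s s')
    (hword : Trace step (computationWord p n) initial final) :
    (machinePresentation p m).IsModel n 0
      fun x => pullback (letterStep step (computationWord p n) final x) := by
  apply Presentation.isModel_pullback (rightUnique_letterStep hstep)
  · intro r hr
    rcases List.mem_append.1 hr with hr | hr
    · obtain ⟨r', hr', rfl⟩ := List.mem_map.1 hr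
      simpa only [Prod.map, trace_letterStep_map_machine] using hrelation r' hr'
    · simp only [List.mem_cons, List.not_mem_nil, or_false] at hr
      rcases hr with rfl | rfl | rfl
      exacts [trace_even_shift, trace_odd_shift, trace_trim_halve_shift]
  · simp only [machinePresentation, List.forall_mem_cons, List.not_mem_nil, false_imp_iff,
      implies_true, and_true]
    refine ⟨?_, ?_⟩
    · exact fun s s' h => hnull s s'
        ((congrFun₂ (trace_letterStep_map_machine [.inc 1, .head, .accept]) s s').mp h)
    · rintro s s' ⟨_, ⟨heven, rfl⟩, _, ⟨hodd, _⟩, _⟩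
      omega
  · simp only [machinePresentation, List.forall_mem_cons, List.not_mem_nil, false_imp_iff,
      implies_true, and_true]
    exact ⟨fun s' => ⟨_, List.mem_cons_self, exists_trace_shift s'⟩,
      fun s' => ⟨_, List.mem_cons_self, exists_trace_halve s'⟩, exists_trace_even_or_odd,
      exists_trace_trim_or_last_or_penult hword⟩
  · have hlist : (computationWord p n).map Letter.machine = (machinePresentation p m).head ::
        (List.replicate n (machinePresentation p m).base ++ (machinePresentation p m).tail) := by
      simp [computationWord, machinePresentation]
    rw [← hlist, trace_letterStep_map_machine]
    rfl

end Cycle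

/-! ### The states of a halting machine -/

theorem sum_range_update_add {m i : ℕ} (hi : i < m) (σ : ℕ → ℕ) (x : ℕ) :
    ∑ j ∈ Finset.range m, update σ i x j + σ i = ∑ j ∈ Finset.range m, σ j + x := by
  have hmem : i ∈ Finset.range m := Finset.mem_range.2 hi
  rw [Finset.sum_update_of_mem hmem, ← Finset.add_sum_erase _ σ hmem,
    Finset.sdiff_singleton_eq_erase]
  omega

theorem Program.Run.sum_le {m : ℕ} {p : Program} {σ τ : ℕ → ℕ} {t : ℕ} (h : p.Run σ t τ)
    (hp : p.RegistersBelow m) :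
    ∑ i ∈ Finset.range m, σ i ≤ t + ∑ i ∈ Finset.range m, τ i := by
  induction h with
  | skip σ => omega
  | inc i σ => have := sum_range_update_add hp σ (σ i + 1); omega
  | seq _ _ ihp ihq => have := ihp hp.1; have := ihq hp.2; omega
  | loop_zero => omega
  | @loop_succ i p σ n t τ t' υ hσ _ _ ihbody ihloop =>
    have := sum_range_update_add hp.1 σ n
    have := ihbody hp.2
    have := ihloop hp
    omega

theorem Program.Run.apply_eq_of_le {m : ℕ} {p : Program} {σ τ : ℕ → ℕ} {t : ℕ} (h : p.Run σ t τ)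
    (hp : p.RegistersBelow m) {j : ℕ} (hj : m ≤ j) : τ j = σ j := by
  induction h with
  | skip | loop_zero => rfl
  | inc i σ => exact update_of_ne (hj.trans_lt' hp).ne' _ _
  | seq _ _ ihp ihq => rw [ihq hp.2, ihp hp.1]
  | loop_succ _ _ _ ihbody ihloop =>
    rw [ihloop hp, ihbody hp.2, update_of_ne (hj.trans_lt' hp.1).ne']

/-- The states of the machine: the clock, the contents of the registers, and whether the execution
of the program has begun. -/
abbrev State : Type := (ℕ × (ℕ → ℕ)) × Bool

/-- The steps of the machine with registers below `m` that the letters stand for. -/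
def MachineStep (m : ℕ) : MachineLetter → State → State → Prop
  | .tick, ((k, σ), b), s' => b = false ∧ s' = ((k + 1, σ), false)
  | .start, ((k, σ), b), s' => b = false ∧ (∀ i, σ i = 0) ∧ s' = ((k, σ), false)
  | .inc i, ((k, σ), b), s' => b = false ∧ s' = ((k, update σ i (σ i + 1)), false)
  | .isZero i, ((k, σ), b), s' => b = false ∧ σ i = 0 ∧ s' = ((k, σ), false)
  | .head, ((k, σ), b), s' => b = false ∧ s' = ((k, σ), true)
  | .run p, ((k, σ), b), s' => b = true ∧ p.RegistersBelow m ∧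
      ∃ t τ, p.Run σ t τ ∧ s' = ((k + t, τ), true)
  | .accept, ((k, σ), b), s' => b = true ∧ σ 1 = 0 ∧ s' = ((k, σ), true)

variable {m : ℕ}

theorem rightUnique_machineStep (x : MachineLetter) : RightUnique (MachineStep m x) := by
  rintro s s' s'' h h'
  cases x
  case run p =>
    obtain ⟨_, _, t, τ, hrun, rfl⟩ := h
    obtain ⟨_, _, t', τ', hrun', rfl⟩ := h'
    obtain ⟨rfl, rfl⟩ := hrun.unique hrun'
    rfl
  case tick | inc | head => exact h.2.trans h'.2.symm
  case start | isZero | accept => exact h.2.2.trans h'.2.2.symm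

section Relations

variable {p q : Program} {i j : ℕ}

theorem trace_head_run_skip :
    Trace (MachineStep m) [.head, .run .skip] = Trace (MachineStep m) [.tick, .head] := by
  funext s s'
  apply propext
  constructor
  · rintro ⟨_, ⟨hs, rfl⟩, _, ⟨-, -, _, _, ⟨⟩, rfl⟩, rfl⟩
    exact ⟨_, ⟨hs, rfl⟩, _, ⟨rfl, rfl⟩, rfl⟩
  · rintro ⟨_, ⟨hs, rfl⟩, _, ⟨-, rfl⟩, rfl⟩
    exact ⟨_, ⟨hs, rfl⟩, _, ⟨rfl, trivial, _, _, .skip _, rfl⟩, rfl⟩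

theorem trace_head_run_inc (hi : i < m) : Trace (MachineStep m) [.head, .run (.inc i)] =
    Trace (MachineStep m) [.tick, .inc i, .head] := by
  funext s s'
  apply propext
  constructor
  · rintro ⟨_, ⟨hs, rfl⟩, _, ⟨-, -, _, _, ⟨⟩, rfl⟩, rfl⟩
    exact ⟨_, ⟨hs, rfl⟩, _, ⟨rfl, rfl⟩, _, ⟨rfl, rfl⟩, rfl⟩
  · rintro ⟨_, ⟨hs, rfl⟩, _, ⟨-, rfl⟩, _, ⟨-, rfl⟩, rfl⟩
    exact ⟨_, ⟨hs, rfl⟩, _, ⟨rfl, hi, _, _, .inc _ _, rfl⟩, rfl⟩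

theorem trace_head_run_seq : Trace (MachineStep m) [.head, .run (.seq p q)] =
    Trace (MachineStep m) [.tick, .head, .run p, .run q] := by
  funext s s'
  apply propext
  constructor
  · rintro ⟨_, ⟨hs, rfl⟩, _, ⟨-, hpq, _, _, hrun, rfl⟩, rfl⟩
    cases hrun with
    | seq hp hq =>
      refine ⟨_, ⟨hs, rfl⟩, _, ⟨rfl, rfl⟩, _, ⟨rfl, hpq.1, _, _, hp, rfl⟩, _,
        ⟨rfl, hpq.2, _, _, hq, rfl⟩, ?_⟩
      simp only [Trace, add_assoc]
  · rintro ⟨_, ⟨hs, rfl⟩, _, ⟨-, rfl⟩, _, ⟨-, hp, _, _, hrunp, rfl⟩, _,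
      ⟨-, hq, _, _, hrunq, rfl⟩, rfl⟩
    refine ⟨_, ⟨hs, rfl⟩, _, ⟨rfl, ⟨hp, hq⟩, _, _, .seq hrunp hrunq, rfl⟩, ?_⟩
    simp only [Trace, add_assoc]

theorem trace_inc_head_run_loop : Trace (MachineStep m) [.inc i, .head, .run (.loop i p)] =
    Trace (MachineStep m) [.tick, .head, .run p, .run (.loop i p)] := by
  funext s s'
  apply propext
  have hrestore (σ : ℕ → ℕ) (x : ℕ) : update (update σ i x) i (σ i) = σ := by
    rw [update_idem, update_eq_self]
  constructor
  · rintro ⟨_, ⟨hs, rfl⟩, _, ⟨-, rfl⟩, _, ⟨-, hp, _, _, hrun, rfl⟩, rfl⟩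
    cases hrun with
    | loop_zero h => simp at h
    | loop_succ h hbody hloop =>
      rw [update_self, Nat.add_right_cancel_iff] at h
      subst h
      rw [hrestore] at hbody
      refine ⟨_, ⟨hs, rfl⟩, _, ⟨rfl, rfl⟩, _, ⟨rfl, hp.2, _, _, hbody, rfl⟩, _,
        ⟨rfl, hp, _, _, hloop, rfl⟩, ?_⟩
      simp only [Trace, add_assoc]
  · rintro ⟨_, ⟨hs, rfl⟩, _, ⟨-, rfl⟩, _, ⟨-, -, _, _, hbody, rfl⟩, _,
      ⟨-, hp, _, _, hloop, rfl⟩, rfl⟩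
    refine ⟨_, ⟨hs, rfl⟩, _, ⟨rfl, rfl⟩, _, ⟨rfl, hp, _, _,
      .loop_succ (update_self _ _ _) (by rwa [hrestore]) hloop, rfl⟩, ?_⟩
    simp only [Trace, add_assoc]

theorem trace_isZero_head_run_loop (hp : (Program.loop i p).RegistersBelow m) :
    Trace (MachineStep m) [.isZero i, .head, .run (.loop i p)] =
      Trace (MachineStep m) [.tick, .isZero i, .head] := by
  funext s s'
  apply propext
  constructor
  · rintro ⟨_, ⟨hs, hi, rfl⟩, _, ⟨-, rfl⟩, _, ⟨-, -, _, _, hrun, rfl⟩, rfl⟩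
    cases hrun with
    | loop_zero => exact ⟨_, ⟨hs, rfl⟩, _, ⟨rfl, hi, rfl⟩, _, ⟨rfl, rfl⟩, rfl⟩
    | loop_succ h => omega
  · rintro ⟨_, ⟨hs, rfl⟩, _, ⟨-, hi, rfl⟩, _, ⟨-, rfl⟩, rfl⟩
    exact ⟨_, ⟨hs, hi, rfl⟩, _, ⟨rfl, rfl⟩, _, ⟨rfl, hp, _, _, .loop_zero hi, rfl⟩, rfl⟩

theorem trace_start_isZero :
    Trace (MachineStep m) [.start, .isZero i] = Trace (MachineStep m) [.start] := by
  funext s s'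
  apply propext
  constructor
  · rintro ⟨_, ⟨hs, hzero, rfl⟩, _, ⟨-, -, rfl⟩, rfl⟩
    exact ⟨_, ⟨hs, hzero, rfl⟩, rfl⟩
  · rintro ⟨_, ⟨hs, hzero, rfl⟩, rfl⟩
    exact ⟨_, ⟨hs, hzero, rfl⟩, _, ⟨rfl, hzero i, rfl⟩, rfl⟩

theorem trace_tick_inc :
    Trace (MachineStep m) [.tick, .inc i] = Trace (MachineStep m) [.inc i, .tick] := by
  funext s s'
  apply propext
  constructor <;>
  · rintro ⟨_, ⟨hs, rfl⟩, _, ⟨-, rfl⟩, rfl⟩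
    exact ⟨_, ⟨hs, rfl⟩, _, ⟨rfl, rfl⟩, rfl⟩

theorem trace_tick_isZero :
    Trace (MachineStep m) [.tick, .isZero i] = Trace (MachineStep m) [.isZero i, .tick] := by
  funext s s'
  apply propext
  constructor
  · rintro ⟨_, ⟨hs, rfl⟩, _, ⟨-, hi, rfl⟩, rfl⟩
    exact ⟨_, ⟨hs, hi, rfl⟩, _, ⟨rfl, rfl⟩, rfl⟩
  · rintro ⟨_, ⟨hs, hi, rfl⟩, _, ⟨-, rfl⟩, rfl⟩
    exact ⟨_, ⟨hs, rfl⟩, _, ⟨rfl, hi, rfl⟩, rfl⟩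

theorem trace_inc_inc (hji : j ≠ i) :
    Trace (MachineStep m) [.inc i, .inc j] = Trace (MachineStep m) [.inc j, .inc i] := by
  funext s s'
  apply propext
  constructor <;>
  · rintro ⟨_, ⟨hs, rfl⟩, _, ⟨-, rfl⟩, rfl⟩
    refine ⟨_, ⟨hs, rfl⟩, _, ⟨rfl, rfl⟩, ?_⟩
    simp only [Trace, update_of_ne hji, update_of_ne hji.symm, update_comm hji]

theorem trace_isZero_inc (hji : j ≠ i) :
    Trace (MachineStep m) [.isZero i, .inc j] = Trace (MachineStep m) [.inc j, .isZero i] := by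
  funext s s'
  apply propext
  constructor
  · rintro ⟨_, ⟨hs, hi, rfl⟩, _, ⟨-, rfl⟩, rfl⟩
    exact ⟨_, ⟨hs, rfl⟩, _, ⟨rfl, (update_of_ne hji.symm _ _).trans hi, rfl⟩, rfl⟩
  · rintro ⟨_, ⟨hs, rfl⟩, _, ⟨-, hi, rfl⟩, rfl⟩
    exact ⟨_, ⟨hs, (update_of_ne hji.symm _ _).symm.trans hi, rfl⟩, _, ⟨rfl, rfl⟩, rfl⟩

theorem trace_eq_of_mem_programRelations (hp : p.RegistersBelow m) :
    ∀ r ∈ programRelations p, Trace (MachineStep m) r.1 = Trace (MachineStep m) r.2 := by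
  induction p with
  | skip => simpa [programRelations] using trace_head_run_skip
  | inc i => simpa [programRelations] using trace_head_run_inc hp
  | seq p q ihp ihq =>
    rw [programRelations, List.forall_mem_cons, List.forall_mem_append]
    exact ⟨trace_head_run_seq, ihp hp.1, ihq hp.2⟩
  | loop i p ih =>
    rw [programRelations, List.forall_mem_cons, List.forall_mem_cons]
    exact ⟨trace_inc_head_run_loop, trace_isZero_head_run_loop hp, ih hp.2⟩

theorem trace_eq_of_mem_registerRelations :
    ∀ r ∈ registerRelations m, Trace (MachineStep m) r.1 = Trace (MachineStep m) r.2 := by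
  intro r hr
  obtain ⟨i, -, hr⟩ := List.mem_flatMap.1 hr
  simp only [List.mem_cons, List.mem_flatMap, List.mem_filter, decide_eq_true_eq,
    List.not_mem_nil, or_false] at hr
  rcases hr with rfl | rfl | rfl | ⟨j, ⟨-, hji⟩, rfl | rfl⟩
  exacts [trace_start_isZero, trace_tick_inc, trace_tick_isZero, trace_inc_inc hji,
    trace_isZero_inc hji]

theorem trace_eq_of_mem_machineRelations (hp : p.RegistersBelow m) :
    ∀ r ∈ machineRelations p m, Trace (MachineStep m) r.1 = Trace (MachineStep m) r.2 :=
  List.forall_mem_append.2 ⟨trace_eq_of_mem_programRelations hp, trace_eq_of_mem_registerRelations⟩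

end Relations

theorem not_trace_inc_head_accept (s s' : State) :
    ¬ Trace (MachineStep m) [.inc 1, .head, .accept] s s' := by
  rintro ⟨_, ⟨-, rfl⟩, _, ⟨-, rfl⟩, _, ⟨-, hzero, -⟩, -⟩
  simp only [update_self, Nat.add_one_ne_zero] at hzero

section Halting

variable {p : Program} {n t : ℕ} {τ : ℕ → ℕ}

theorem trace_replicate_inc (k n x : ℕ) :
    Trace (MachineStep m) (List.replicate n (.inc 0)) ((k, inputState x), false)
      ((k, inputState (x + n)), false) := by
  induction n generalizing x with
  | zero => rfl
  | succ n ih =>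
    refine ⟨_, ⟨rfl, rfl⟩, ?_⟩
    simpa [inputState, add_assoc, add_comm 1] using ih (x + 1)

theorem trace_computationWord (hp : p.RegistersBelow m) (hrun : p.Run (inputState n) t τ)
    (hτ : τ 1 = 0) :
    Trace (MachineStep m) (computationWord p n) ((0, fun _ => 0), false) ((t, τ), true) := by
  have hload : Trace (MachineStep m) (List.replicate n (.inc 0)) ((0, fun _ => 0), false)
      ((0, inputState n), false) := by
    simpa [inputState] using trace_replicate_inc (m := m) 0 n 0
  have hexecute : Trace (MachineStep m) [.head, .run p, .accept] ((0, inputState n), false)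
      ((t, τ), true) :=
    ⟨_, ⟨rfl, rfl⟩, _, ⟨rfl, hp, t, τ, hrun, rfl⟩, _, ⟨rfl, hτ, rfl⟩,
      by simp only [Trace, zero_add]⟩
  exact ⟨_, ⟨rfl, fun _ => rfl, rfl⟩, trace_append hload hexecute⟩

end Halting

/-- The clocks and register contents of the machine with registers below `m` that are bounded by
`l`. -/
def Bounded (m l : ℕ) (c : ℕ × (ℕ → ℕ)) : Prop :=
  c.1 + ∑ i ∈ Finset.range m, c.2 i ≤ l ∧ ∀ i, m ≤ i → c.2 i = 0

variable {l : ℕ}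

theorem MachineStep.bounded {x : MachineLetter} {s s' : State} (h : MachineStep m x s s')
    (hs' : Bounded m l s'.1) : Bounded m l s.1 := by
  obtain ⟨⟨k, σ⟩, b⟩ := s
  cases x
  case tick =>
    obtain ⟨-, rfl⟩ := h
    exact ⟨by grind [Bounded], hs'.2⟩
  case inc i =>
    obtain ⟨-, rfl⟩ := h
    have hi : i < m := not_le.1 fun hi => by simpa using hs'.2 i hi
    have hsum := sum_range_update_add hi σ (σ i + 1)
    exact ⟨by grind [Bounded], fun j hj =>
      (update_of_ne (hi.trans_le hj).ne' _ _).symm.trans (hs'.2 j hj)⟩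
  case run p =>
    obtain ⟨-, hp, t, τ, hrun, rfl⟩ := h
    have hsum := hrun.sum_le hp
    exact ⟨by grind [Bounded], fun j hj =>
      (hrun.apply_eq_of_le hp hj).symm.trans (hs'.2 j hj)⟩
  case head => obtain ⟨-, rfl⟩ := h; exact hs'
  case start | isZero | accept => obtain ⟨-, -, rfl⟩ := h; exact hs'

theorem finite_bounded (m l : ℕ) : Finite {c // Bounded m l c} := by
  have hle {c} (hc : Bounded m l c) (i : Fin m) : c.2 i < l + 1 := by
    have := Finset.single_le_sum (f := c.2) (fun _ _ => Nat.zero_le _) (Finset.mem_range.2 i.2)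
    have := hc.1
    omega
  let truncate (c : {c // Bounded m l c}) : Fin (l + 1) × (Fin m → Fin (l + 1)) :=
    (⟨c.1.1, by have := c.2.1; omega⟩, fun i => ⟨c.1.2 i, hle c.2 i⟩)
  refine Finite.of_injective truncate fun ⟨c, hc⟩ ⟨c', hc'⟩ h => ?_
  simp only [truncate, Prod.mk.injEq, Fin.mk.injEq, funext_iff] at h
  refine Subtype.ext (Prod.ext h.1 (funext fun i => ?_))
  rcases lt_or_ge i m with hi | hi
  · exact h.2 ⟨i, hi⟩
  · exact (hc.2 i hi).trans (hc'.2 i hi).symm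

theorem exists_injective_range_eq_bounded (m l : ℕ) : ∃ (d : ℕ) (state : Fin (2 * d) → State),
    Injective state ∧ ∀ s : State, Bounded m l s.1 ↔ s ∈ Set.range state := by
  have := finite_bounded m l
  let d := Nat.card {c // Bounded m l c}
  let e : Fin (2 * d) ≃ {c // Bounded m l c} × Bool :=
    (Finite.equivFinOfCardEq (by simp [d, mul_comm])).symm
  refine ⟨d, Prod.map Subtype.val id ∘ e,
    (Subtype.val_injective.prodMap injective_id).comp e.injective, fun s => ?_⟩
  rw [e.surjective.range_comp, Set.range_prodMap, Set.mem_prod]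
  simp

section Restriction

variable {L B C : Type} {step : L → B → B → Prop} {state : C → B}
  (hclosed : ∀ x b b', step x b b' → b' ∈ Set.range state → b ∈ Set.range state)
include hclosed

theorem mem_range_of_trace {u : List L} {b b' : B} (h : Trace step u b b')
    (hb' : b' ∈ Set.range state) : b ∈ Set.range state := by
  induction u generalizing b with
  | nil => exact h ▸ hb'
  | cons x u ih =>
    obtain ⟨a, hx, hu⟩ := h
    exact hclosed x b a hx (ih hu)

theorem trace_comap_iff (hinj : Injective state) (u : List L) (c c' : C) :
    Trace (fun x a a' => step x (state a) (state a')) u c c' ↔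
      Trace step u (state c) (state c') := by
  induction u generalizing c with
  | nil => exact hinj.eq_iff.symm
  | cons x u ih =>
    constructor
    · rintro ⟨a, hx, hu⟩
      exact ⟨state a, hx, (ih a).1 hu⟩
    · rintro ⟨b, hx, hu⟩
      obtain ⟨a, rfl⟩ := mem_range_of_trace hclosed hu ⟨c', rfl⟩
      exact ⟨a, hx, (ih a).2 hu⟩

end Restriction

theorem solvable_of_run {p : Program} {n t : ℕ} {τ : ℕ → ℕ} (hp : p.RegistersBelow m)
    (hm : 0 < m) (hrun : p.Run (inputState n) t τ) (hτ : τ 1 = 0) :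
    Solvable ((machinePresentation p m).equations n).network := by
  obtain ⟨d, state, hinj, hrange⟩ :=
    exists_injective_range_eq_bounded m (t + ∑ i ∈ Finset.range m, τ i)
  have hclosed (x s s') (h : MachineStep m x s s') (hs' : s' ∈ Set.range state) :
      s ∈ Set.range state := (hrange s).1 (h.bounded ((hrange s').2 hs'))
  have htrace := trace_comap_iff hclosed hinj
  have hword := trace_computationWord hp hrun hτ
  have hτ_zero (i : ℕ) (hi : m ≤ i) : τ i = 0 :=
    (hrun.apply_eq_of_le hp hi).trans (update_of_ne (hm.trans_le hi).ne' _ _)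
  obtain ⟨final, hfinal⟩ := (hrange ((t, τ), true)).1 ⟨le_rfl, hτ_zero⟩
  obtain ⟨initial, hinitial⟩ := mem_range_of_trace hclosed hword ⟨final, hfinal⟩
  rw [← hfinal, ← hinitial, ← htrace] at hword
  have : Nonempty (Fin (2 * d)) := ⟨final⟩
  refine (machinePresentation_isModel (fun x => ?_) (fun r hr => ?_) (fun s s' h => ?_)
    hword).solvable
  · exact fun _ _ _ h h' => hinj (rightUnique_machineStep x h h')
  · funext s s'
    rw [htrace, htrace, trace_eq_of_mem_machineRelations hp r hr]
  · exact not_trace_inc_head_accept _ _ ((htrace _ _ _).1 h)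

/-! ### Reduction of the values of a partial recursive function to solvability -/

theorem exists_primrec_network_of_partrec {φ : ℕ →. ℕ} (hφ : Partrec φ) :
    ∃ net : ℕ → Network, Primrec net ∧ (∀ n, NetworkValid (net n)) ∧
      ∀ n z, z ∈ φ n → (Solvable (net n) ↔ z = 0) := by
  obtain ⟨p, hp⟩ := exists_program_of_partrec hφ
  obtain ⟨m, hm⟩ := p.exists_registersBelow
  have hbelow : p.RegistersBelow (m + 2) := hm.mono (by omega)
  refine ⟨_, (machinePresentation p (m + 2)).primrec_network,
    fun n => (Presentation.equations_wellFormed n).network_valid, fun n z hz => ?_⟩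
  obtain ⟨t, hrun⟩ := hp n z hz
  refine ⟨fun hsolvable => by_contra fun hne => ?_, fun hzero => ?_⟩
  · exact not_solvable_of_run hbelow (by omega) hrun (by rwa [update_self]) hsolvable
  · exact solvable_of_run hbelow (by omega) hrun (by rwa [update_self])

/-- The partial function that applies the code with number `n` to `n`. -/
def diagonal : ℕ →. ℕ := fun n => (Denumerable.ofNat Nat.Partrec.Code n).eval n

theorem partrec_diagonal : Partrec diagonal :=
  Nat.Partrec.Code.eval_part.comp (Computable.ofNat Nat.Partrec.Code) Computable.id

theorem exists_mem_diagonal {g : ℕ → ℕ} (hg : Computable g) : ∃ n, g n ∈ diagonal n := by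
  obtain ⟨c, hc⟩ := Nat.Partrec.Code.exists_code.1 (Partrec.nat_iff.1 hg)
  refine ⟨Encodable.encode c, ?_⟩
  rw [diagonal, Denumerable.ofNat_encode, hc]
  exact Part.mem_some _

end NetworkCoding

/-- Theorem `netcode`: network coding is undecidable: no computable
function decides, given a (valid) network, whether it is solvable. -/
theorem undecidable_network_coding :
    ¬ ∃ f : Network → Bool, Computable f ∧
      ∀ net : Network, NetworkValid net → (f net = true ↔ Solvable net) := by
  rintro ⟨f, hf, hdecides⟩
  obtain ⟨net, hnet, hvalid, hsolvable⟩ :=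
    NetworkCoding.exists_primrec_network_of_partrec NetworkCoding.partrec_diagonal
  have hflip : Computable fun n => cond (f (net n)) 1 0 :=
    (hf.comp hnet.to_comp).cond (Computable.const 1) (Computable.const 0)
  obtain ⟨n, hn⟩ := NetworkCoding.exists_mem_diagonal hflip
  have hiff := (hdecides (net n) (hvalid n)).trans (hsolvable n _ hn)
  cases hfn : f (net n) <;> simp [hfn] at hiff

end
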